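/- arXiv:math/0603213 — 4 statements merged into one kernel-verified Lean document; each statement's English description precedes it below -/
import Mathlib

section
/- Let f be a fixed point free orientation preserving homeomorphism of the plane ℝ². Then f has no periodic points: for every n ≥ 1 and every x ∈ ℝ², fⁿ(x) ≠ x. -/
/-!
Let `h` be fixed point free and isotopic to the identity through homeomorphisms `F τ`, and suppose
it has a periodic point `p`.

* Growing a round ball about `p` until it first touches its image gives `z` such that `z` and `h z`
  lie on the boundary sphere while the open ball is disjoint from its image. The two radii joining
  `z` to `p` and `p` to `h z` form an arc from `z` to `h z`. Its images under the powers of `h` fit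
  together to a curve `Γ : ℝ → Plane` with `Γ (u + 1) = h (Γ u)`, and `Γ s ≠ Γ t` for
  `0 < t - s ≤ 1` (`exists_equivariant_curve`).
* As `Γ` passes through `p`, it is not injective; by compactness there is a least `T > 0` for which
  some `s` satisfies `Γ s = Γ (s + T)`, and `T > 1` (`exists_least_return`).
* On the convex set `0 < t - s < T`, times the isotopy parameter, `F τ (Γ t) - F τ (Γ s)` does not
  vanish, so it has a continuous logarithm `Λ τ s t`; likewise `h x - x` has a logarithm `θ` on the
  plane. Fix `s`, `t = s + T` with `Γ s = Γ t`. For `s < u < t` the vectors from `Γ u` to `Γ t` and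
  from `Γ s` to `Γ u` are opposite, and remain so along the isotopy, so
  `c = Λ τ u t - Λ τ s u` is a constant with `exp c = -1`. Since `Λ 1 s t` and `Λ 0 (s + 1) (t + 1)`
  differ by a constant, also `Λ 0 v (t + 1) - Λ 0 (s + 1) v = c` for `s + 1 < v < t + 1`. Taking
  `u = s + 1` and `v = t` gives `Λ 0 t (t + 1) - Λ 0 s (s + 1) = 2 c`. But `Λ 0 r (r + 1)` and
  `θ (Γ r)` differ by a constant and `Γ s = Γ t`, so `2 c = 0`, contradicting `exp c = -1`
  (`false_of_least_return`).
-/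

abbrev Plane := EuclideanSpace ℝ (Fin 2)

/-- A self-homeomorphism (given as a map) is isotopic to the identity; for
homeomorphisms of the plane this is equivalent to being orientation preserving. -/
def IsotopicToId {X : Type*} [TopologicalSpace X] (f : X → X) : Prop :=
  ∃ F : ℝ → X → X, Continuous (fun p : ℝ × X => F p.1 p.2) ∧
    (∀ t : ℝ, ∃ g : Homeomorph X X, ⇑g = F t) ∧ F 0 = id ∧ F 1 = f

open Set Filter Topology

/-- A continuous logarithm of a constant function on a preconnected set is constant. -/
lemma eq_of_exp_const {X : Type*} [TopologicalSpace X] {S : Set X} (hS : IsPreconnected S)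
    {f : X → ℂ} (hf : ContinuousOn f S) {w : ℂ} (hw : ∀ x ∈ S, Complex.exp (f x) = w)
    {x y : X} (hx : x ∈ S) (hy : y ∈ S) : f x = f y := by
  have hw0 : w ≠ 0 := by rw [← hw x hx]; exact Complex.exp_ne_zero _
  have : DiscreteTopology (Complex.exp ⁻¹' {w}) := (Complex.isCoveringMapOn_exp w hw0).1
  exact hS.constant_of_mapsTo (T := Complex.exp ⁻¹' {w}) ⟨this⟩ hf (fun z hz => hw z hz) hx hy

/-- Two continuous logarithms of the same function on a preconnected set differ by a constant. -/
lemma sub_eq_sub_of_exp_eq {X : Type*} [TopologicalSpace X] {S : Set X} (hS : IsPreconnected S)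
    {f g : X → ℂ} (hf : ContinuousOn f S) (hg : ContinuousOn g S)
    (hfg : ∀ x ∈ S, Complex.exp (f x) = Complex.exp (g x))
    {x y : X} (hx : x ∈ S) (hy : y ∈ S) : f x - g x = f y - g y :=
  eq_of_exp_const (f := fun x => f x - g x) hS (hf.sub hg) (w := 1)
    (fun z hz => by rw [Complex.exp_sub, hfg z hz, div_self (Complex.exp_ne_zero _)]) hx hy

lemma exists_log_of_convex {E : Type*} [NormedAddCommGroup E] [NormedSpace ℝ E] {S : Set E}
    (hc : Convex ℝ S) (ho : IsOpen S) (hne : S.Nonempty) {g : E → ℂ} (hg : ContinuousOn g S)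
    (h0 : ∀ x ∈ S, g x ≠ 0) :
    ∃ f : E → ℂ, ContinuousOn f S ∧ ∀ x ∈ S, Complex.exp (f x) = g x := by
  have : ContractibleSpace S := hc.contractibleSpace hne
  have hs : IsSimplyConnected S := inferInstanceAs (SimplyConnectedSpace S)
  obtain ⟨f, hf, hfe⟩ := Complex.exists_continuousOn_eqOn_exp_comp hs ho hg
    (by rintro ⟨x, hx, hx0⟩; exact h0 x hx hx0)
  exact ⟨f, hf, fun x hx => hfe hx⟩

/-- The plane as `ℂ`. -/
noncomputable def planeToComplex : Plane ≃ₗᵢ[ℝ] ℂ := Complex.orthonormalBasisOneI.repr.symm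

/-- A curve equivariant under `h` cannot have a least return time `T > 1`. -/
lemma false_of_least_return (h : Homeomorph Plane Plane)
    (hfree : ∀ x : Plane, h x ≠ x) (hor : IsotopicToId ⇑h) (Γ : ℝ → Plane) (hΓ : Continuous Γ)
    (hΓ1 : ∀ u, Γ (u + 1) = h (Γ u)) (T : ℝ) (hT : 1 < T)
    (hmin : ∀ s t, 0 < t - s → t - s < T → Γ s ≠ Γ t) (s : ℝ) (hs : Γ s = Γ (s + T)) : False := by
  obtain ⟨F, hF, hFh, hF0, hF1⟩ := hor
  have hFi : ∀ τ, Function.Injective (F τ) := fun τ => by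
    obtain ⟨g, hg⟩ := hFh τ
    rw [← hg]; exact g.injective
  set D : Set (ℝ × ℝ × ℝ) := {q | 0 < q.2.2 - q.2.1 ∧ q.2.2 - q.2.1 < T} with hD
  have hDo : IsOpen D :=
    isOpen_Ioo.preimage (show Continuous fun q : ℝ × ℝ × ℝ => q.2.2 - q.2.1 by fun_prop)
  have hDc : Convex ℝ D := by
    let l : ℝ × ℝ × ℝ →ₗ[ℝ] ℝ :=
      (LinearMap.snd ℝ ℝ ℝ - LinearMap.fst ℝ ℝ ℝ).comp (LinearMap.snd ℝ ℝ (ℝ × ℝ))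
    exact (convex_Ioo (0 : ℝ) T).linear_preimage l
  obtain ⟨Λ, hΛ, hΛe⟩ := exists_log_of_convex hDc hDo ⟨(0, 0, 1), by simp [hD, hT]⟩
    (g := fun q => planeToComplex (F q.1 (Γ q.2.2) - F q.1 (Γ q.2.1)))
    (by
      have h1 : Continuous fun q : ℝ × ℝ × ℝ => F q.1 (Γ q.2.2) :=
        hF.comp (continuous_fst.prodMk (hΓ.comp (by fun_prop)))
      have h2 : Continuous fun q : ℝ × ℝ × ℝ => F q.1 (Γ q.2.1) :=
        hF.comp (continuous_fst.prodMk (hΓ.comp (by fun_prop)))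
      exact (planeToComplex.continuous.comp (h1.sub h2)).continuousOn)
    (fun q hq => by
      rw [Ne, LinearIsometryEquiv.map_eq_zero_iff, sub_eq_zero]
      exact fun he => hmin _ _ hq.1 hq.2 (hFi _ he).symm)
  obtain ⟨θ, hθ, hθe⟩ := exists_log_of_convex (E := Plane) convex_univ isOpen_univ univ_nonempty
    (g := fun x => planeToComplex (h x - x))
    (planeToComplex.continuous.comp (h.continuous.sub continuous_id)).continuousOn
    (fun x _ => by
      rw [Ne, LinearIsometryEquiv.map_eq_zero_iff, sub_eq_zero]
      exact hfree x)
  have hθ' : Continuous θ := continuousOn_univ.1 hθ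
  -- the difference of the two logarithms with common endpoint `Γ s = Γ (s + T)`
  set S : Set (ℝ × ℝ) := {q | s < q.2 ∧ q.2 < s + T} with hS
  have hSc : Convex ℝ S := (convex_Ioo s (s + T)).linear_preimage (LinearMap.snd ℝ ℝ ℝ)
  have hc1 : ContinuousOn (fun q : ℝ × ℝ => Λ (q.1, q.2, s + T)) S :=
    hΛ.comp (Continuous.continuousOn (by fun_prop)) fun q hq =>
      ⟨by simpa using hq.2, by simpa using by linarith [hq.1]⟩
  have hc2 : ContinuousOn (fun q : ℝ × ℝ => Λ (q.1, s, q.2)) S :=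
    hΛ.comp (Continuous.continuousOn (by fun_prop)) fun q hq =>
      ⟨by simpa using hq.1, by simpa using by linarith [hq.2]⟩
  have hexp : ∀ q ∈ S, Complex.exp (Λ (q.1, q.2, s + T) - Λ (q.1, s, q.2)) = -1 := by
    rintro ⟨τ, u⟩ ⟨h1, h2⟩
    simp only at h1 h2
    rw [Complex.exp_sub, hΛe _ ⟨by simpa using h2, by simpa using by linarith⟩,
      div_eq_iff (Complex.exp_ne_zero _), hΛe _ ⟨by simpa using h1, by simpa using by linarith⟩]
    simp only [← hs, neg_one_mul, ← map_neg, neg_sub]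
  have hconst : ∀ q ∈ S, ∀ q' ∈ S,
      Λ (q.1, q.2, s + T) - Λ (q.1, s, q.2) = Λ (q'.1, q'.2, s + T) - Λ (q'.1, s, q'.2) :=
    fun q hq q' hq' => eq_of_exp_const
      (f := fun q : ℝ × ℝ => Λ (q.1, q.2, s + T) - Λ (q.1, s, q.2)) hSc.isPreconnected
      (hc1.sub hc2) hexp hq hq'
  -- the end of the isotopy is the shift by one
  have hshift : ∀ q ∈ D, ∀ q' ∈ D,
      Λ (1, q.2.1, q.2.2) - Λ (0, q.2.1 + 1, q.2.2 + 1)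
        = Λ (1, q'.2.1, q'.2.2) - Λ (0, q'.2.1 + 1, q'.2.2 + 1) := fun q hq q' hq' =>
    sub_eq_sub_of_exp_eq (f := fun q : ℝ × ℝ × ℝ => Λ (1, q.2.1, q.2.2))
      (g := fun q : ℝ × ℝ × ℝ => Λ (0, q.2.1 + 1, q.2.2 + 1)) hDc.isPreconnected
      (hΛ.comp (Continuous.continuousOn (by fun_prop)) fun q hq => ⟨hq.1, hq.2⟩)
      (hΛ.comp (Continuous.continuousOn (by fun_prop)) fun q hq =>
        ⟨by simpa using hq.1, by simpa using hq.2⟩)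
      (fun q hq => by
        rw [hΛe (1, q.2.1, q.2.2) ⟨hq.1, hq.2⟩,
          hΛe (0, q.2.1 + 1, q.2.2 + 1) ⟨by simpa using hq.1, by simpa using hq.2⟩]
        simp [hF0, hF1, hΓ1]) hq hq'
  have hstep : ∀ r r' : ℝ, Λ (0, r, r + 1) - θ (Γ r) = Λ (0, r', r' + 1) - θ (Γ r') := fun r r' =>
    sub_eq_sub_of_exp_eq (f := fun r : ℝ => Λ (0, r, r + 1)) (g := fun r => θ (Γ r))
      (S := univ) isPreconnected_univ
      (hΛ.comp (Continuous.continuousOn (by fun_prop)) fun q _ =>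
        ⟨by simp, by simpa using hT⟩)
      (hθ'.comp hΓ).continuousOn
      (fun r _ => by
        rw [hΛe _ ⟨by simp, by simpa using hT⟩, hθe _ (mem_univ _)]
        simp [hF0, hΓ1]) (mem_univ r) (mem_univ r')
  have e1 := hconst (0, s + 1) ⟨by simp, by simpa using hT⟩ (1, s + T - 1)
    ⟨by simpa using by linarith, by simp⟩
  have e2 := hshift (0, s + T - 1, s + T) ⟨by simp, by simpa using hT⟩ (0, s, s + T - 1)
    ⟨by simpa using by linarith, by simpa using by linarith⟩
  have e3 := hstep s (s + T)
  rw [← hs] at e3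
  have e4 := hexp (0, s + 1) ⟨by simp, by simpa using hT⟩
  simp only [sub_add_cancel] at e1 e2 e3 e4
  have : Λ (0, s + 1, s + T) - Λ (0, s, s + 1) = 0 := by
    linear_combination (1 / 2 : ℂ) * (e1 + e2 - e3)
  rw [this, Complex.exp_zero] at e4
  norm_num at e4

/-- The first contact of a growing ball about `p` with its image: the contact points `z` and `h z`
lie on the sphere, and the open ball is disjoint from its image. -/
lemma exists_contact (h : Homeomorph Plane Plane) (hfree : ∀ x : Plane, h x ≠ x) (p : Plane) :
    ∃ z r, 0 < r ∧ dist z p = r ∧ dist (h z) p = r ∧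
      ∀ w, dist w p < r → r ≤ dist (h w) p := by
  have hcont : Continuous fun z => max (dist z p) (dist (h z) p) := by fun_prop
  have hlim : Tendsto (fun z => max (dist z p) (dist (h z) p)) (cocompact Plane) atTop :=
    tendsto_atTop_mono (fun z => le_max_left _ _) (tendsto_dist_right_cocompact_atTop p)
  obtain ⟨z, hz⟩ := hcont.exists_forall_le hlim
  set r := max (dist z p) (dist (h z) p) with hr
  have hr0 : 0 < r := by
    by_contra hcon
    have h1 : dist z p ≤ 0 := (le_max_left _ _).trans (not_lt.1 hcon)
    have h2 : dist (h z) p ≤ 0 := (le_max_right _ _).trans (not_lt.1 hcon)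
    exact hfree z ((dist_le_zero.1 h2).trans (dist_le_zero.1 h1).symm)
  -- if only one of the two points were on the sphere, it could be pushed into the open ball
  have key : ∀ (g : Plane → Plane) (y : Plane), ContinuousAt g y → dist y p ≤ r →
      dist (g y) p < r → ∃ y', dist y' p < r ∧ dist (g y') p < r := by
    intro g y hg hy hgy
    have hyc : y ∈ closure (Metric.ball p r) := by
      rw [closure_ball p hr0.ne']; exact hy
    have hn : {w | dist (g w) p < r} ∈ 𝓝 y :=
      hg (Metric.isOpen_ball.mem_nhds (show g y ∈ Metric.ball p r from hgy))
    obtain ⟨y', h1, h2⟩ := mem_closure_iff_nhds.1 hyc _ hn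
    exact ⟨y', h2, h1⟩
  refine ⟨z, r, hr0, ?_, ?_, ?_⟩
  · by_contra hne
    obtain ⟨y, h1, h2⟩ := key h.symm (h z) h.symm.continuous.continuousAt (le_max_right _ _)
      (by rw [h.symm_apply_apply]; exact lt_of_le_of_ne (le_max_left _ _) hne)
    have := hz (h.symm y)
    simp only [h.apply_symm_apply] at this
    exact absurd this (not_le.2 (max_lt h2 h1))
  · by_contra hne
    obtain ⟨y, h1, h2⟩ := key h z h.continuous.continuousAt (le_max_left _ _)
      (lt_of_le_of_ne (le_max_right _ _) hne)
    exact absurd (hz y) (not_le.2 (max_lt h1 h2))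
  · intro w hw
    by_contra hcon
    exact absurd (hz w) (not_le.2 (max_lt hw (not_le.1 hcon)))

/-- An arc `α` from `z = α 0` to `h z = α 1` through `p` which meets its image only at `h z`, except
possibly at points `α s = h (α t)` with `s < t`. -/
lemma exists_arc (h : Homeomorph Plane Plane) (hfree : ∀ x : Plane, h x ≠ x) (p : Plane) :
    ∃ α : ℝ → Plane, Continuous α ∧ α 1 = h (α 0) ∧ α (1 / 2) = p ∧
      (∀ s t, 0 ≤ s → s < t → t ≤ 1 → α s ≠ α t) ∧
      (∀ s t, 0 ≤ t → t ≤ s → s < 1 → α s ≠ h (α t)) := by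
  obtain ⟨z, r, hr, hz, hhz, hball⟩ := exists_contact h hfree p
  set α : ℝ → Plane := fun t =>
    p + (max (1 - 2 * t) 0 • (z - p) + max (2 * t - 1) 0 • (h z - p)) with hα
  rw [dist_eq_norm] at hz hhz
  have hL : ∀ t, t ≤ 1 / 2 → α t = p + (1 - 2 * t) • (z - p) := fun t ht => by
    simp only [hα]
    rw [max_eq_left (by linarith), max_eq_right (by linarith)]; simp
  have hR : ∀ t, 1 / 2 ≤ t → α t = p + (2 * t - 1) • (h z - p) := fun t ht => by
    simp only [hα]
    rw [max_eq_right (by linarith), max_eq_left (by linarith)]; simp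
  have h0 : α 0 = z := by rw [hL 0 (by norm_num)]; simp
  have h1 : α 1 = h z := by rw [hR 1 (by norm_num)]; norm_num
  have hzp : z - p ≠ 0 := by rw [← norm_pos_iff, hz]; exact hr
  have hhzp : h z - p ≠ 0 := by rw [← norm_pos_iff, hhz]; exact hr
  have hinj : ∀ s t, 0 ≤ s → s < t → t ≤ 1 → α s ≠ α t := by
    intro s t hs hst ht he
    rcases le_or_gt t (1 / 2) with h2 | h2
    · rw [hL s (by linarith), hL t h2, add_right_inj] at he
      have := smul_left_injective ℝ hzp he
      linarith
    rcases le_or_gt (1 / 2) s with h3 | h3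
    · rw [hR s h3, hR t h2.le, add_right_inj] at he
      have := smul_left_injective ℝ hhzp he
      linarith
    · rw [hL s h3.le, hR t h2.le, add_right_inj] at he
      have hn := congrArg norm he
      rw [norm_smul, norm_smul, hz, hhz, Real.norm_of_nonneg (by linarith),
        Real.norm_of_nonneg (by linarith)] at hn
      have hn' := mul_right_cancel₀ hr.ne' hn
      rw [← hn'] at he
      have := smul_right_injective Plane (show (1 - 2 * s) ≠ 0 by linarith) he
      exact hfree z (sub_left_injective this).symm
  have hin : ∀ t, 0 < t → t < 1 → dist (α t) p < r := by
    intro t ht0 ht1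
    rcases le_total t (1 / 2) with h2 | h2
    · rw [hL t h2, dist_eq_norm, add_sub_cancel_left, norm_smul, hz,
        Real.norm_of_nonneg (by linarith)]
      nlinarith
    · rw [hR t h2, dist_eq_norm, add_sub_cancel_left, norm_smul, hhz,
        Real.norm_of_nonneg (by linarith)]
      nlinarith
  refine ⟨α, by fun_prop, by rw [h0, h1], by rw [hL _ le_rfl]; norm_num, hinj, ?_⟩
  intro s t ht hts hs he
  rcases ht.eq_or_lt with rfl | ht
  · rw [h0, ← h1] at he
    exact hinj s 1 hts hs le_rfl he
  · have hb := hball _ (hin t ht (by linarith))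
    rw [← he] at hb
    exact absurd (hin s (by linarith) hs) (not_lt.2 hb)

/-- The images of the arc under the powers of `h` form one curve, on which `h` acts as the unit
shift of the parameter. -/
lemma exists_equivariant_curve (h : Homeomorph Plane Plane) (hfree : ∀ x : Plane, h x ≠ x)
    (p : Plane) :
    ∃ Γ : ℝ → Plane, Continuous Γ ∧ (∀ u, Γ (u + 1) = h (Γ u)) ∧ Γ (1 / 2) = p ∧
      (∀ s t, 0 < t - s → t - s ≤ 1 → Γ s ≠ Γ t) ∧
      (∀ (k : ℤ) u, Γ (u + k) = (h ^ k) (Γ u)) := by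
  obtain ⟨α, hα, hα1, hαp, hinj, hinj'⟩ := exists_arc h hfree p
  set Γ : ℝ → Plane := fun u => (h ^ ⌊u⌋) (α (Int.fract u)) with hΓ
  have hk : ∀ (k : ℤ) u, Γ (u + k) = (h ^ k) (Γ u) := fun k u => by
    simp only [hΓ, Int.floor_add_intCast, Int.fract_add_intCast]
    rw [add_comm, zpow_add, Homeomorph.mul_apply]
  have h1 : ∀ u, Γ (u + 1) = h (Γ u) := fun u => by
    have := hk 1 u
    rwa [zpow_one, Int.cast_one] at this
  have hα' : ∀ u, 0 ≤ u → u < 1 → Γ u = α u := fun u hu0 hu1 => by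
    simp only [hΓ]
    rw [Int.floor_eq_zero_iff.2 ⟨hu0, hu1⟩, Int.fract_eq_self.2 ⟨hu0, hu1⟩]; simp
  have hαc : ∀ u ∈ Icc (0 : ℝ) 1, Γ u = α u := fun u hu => by
    rcases hu.2.lt_or_eq with hlt | rfl
    · exact hα' u hu.1 hlt
    · have := h1 0
      rw [zero_add] at this
      rw [this, hα' 0 le_rfl one_pos, hα1]
  refine ⟨Γ, ?_, h1, by rw [hα' _ (by norm_num) (by norm_num), hαp], ?_, hk⟩
  · have hlf : LocallyFinite fun k : ℤ => Icc (k : ℝ) (k + 1) :=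
      locallyFinite_Icc_of_tendsto tendsto_intCast_atTop_atTop
        (tendsto_atBot_add_const_right _ _ (tendsto_intCast_atBot_iff.2 tendsto_id))
    refine hlf.continuous ?_ (fun _ => isClosed_Icc) fun k => ?_
    · exact eq_univ_of_forall fun u => mem_iUnion.2
        ⟨⌊u⌋, Int.floor_le u, (Int.lt_floor_add_one u).le⟩
    · have hc : Continuous fun u : ℝ => (h ^ k) (α (u - k)) :=
        (h ^ k).continuous.comp (hα.comp (by fun_prop))
      refine hc.continuousOn.congr fun u hu => ?_
      have := hk k (u - k)
      rw [sub_add_cancel] at this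
      rw [this, hαc _ ⟨by linarith [hu.1], by linarith [hu.2]⟩]
  · intro s t h0 ht he
    -- shift the parameters so that `s` lies in `[0, 1)`
    have hs' : Γ s = (h ^ ⌊s⌋) (Γ (Int.fract s)) := by
      rw [← hk, Int.fract_add_floor]
    have ht' : Γ t = (h ^ ⌊s⌋) (Γ (t - ⌊s⌋)) := by
      rw [← hk, sub_add_cancel]
    rw [hs', ht'] at he
    replace he := (h ^ ⌊s⌋).injective he
    have f0 := Int.fract_nonneg s
    have f1 := Int.fract_lt_one s
    have f2 : t - ⌊s⌋ = Int.fract s + (t - s) := by rw [Int.fract]; ring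
    rw [f2, hα' _ f0 f1] at he
    rcases lt_or_ge (Int.fract s + (t - s)) 1 with h2 | h2
    · rw [hα' _ (by linarith) h2] at he
      exact hinj _ _ f0 (by linarith) h2.le he
    · rw [← sub_add_cancel (Int.fract s + (t - s)) 1, h1, hα' _ (by linarith) (by linarith)] at he
      exact hinj' _ _ (by linarith) (by linarith) f1 he

/-- A curve equivariant under `h` through a periodic point has a least return time. -/
lemma exists_least_return (h : Homeomorph Plane Plane) (hfree : ∀ x : Plane, h x ≠ x)
    (n : ℕ) (hn : 1 ≤ n) (p : Plane) (hp : (⇑h)^[n] p = p) (Γ : ℝ → Plane) (hΓ : Continuous Γ)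
    (h1 : ∀ u, Γ (u + 1) = h (Γ u)) (hΓp : Γ (1 / 2) = p)
    (hne : ∀ s t, 0 < t - s → t - s ≤ 1 → Γ s ≠ Γ t)
    (hk : ∀ (k : ℤ) u, Γ (u + k) = (h ^ k) (Γ u)) :
    ∃ s T, 1 < T ∧ Γ s = Γ (s + T) ∧ ∀ s t, 0 < t - s → t - s < T → Γ s ≠ Γ t := by
  have hiter : ∀ (m : ℕ) u, Γ (u + m) = (⇑h)^[m] (Γ u) := by
    intro m u
    induction m with
    | zero => simp
    | succ m ih => rw [Function.iterate_succ_apply', ← ih, ← h1]; push_cast; ring_nf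
  have hn' : (1 : ℝ) ≤ n := by exact_mod_cast hn
  set K : Set (ℝ × ℝ) := (Icc 0 1 ×ˢ Icc 1 (n : ℝ)) ∩ {q | Γ q.1 = Γ (q.1 + q.2)} with hK
  have hKc : IsCompact K := (isCompact_Icc.prod isCompact_Icc).inter_right
    (isClosed_eq (by fun_prop) (by fun_prop))
  have hKne : K.Nonempty := ⟨(1 / 2, n), ⟨⟨by norm_num, by norm_num⟩, hn', le_rfl⟩, by
    simp only [mem_ofPred_eq]
    rw [hiter, hΓp, hp]⟩
  obtain ⟨⟨s, T⟩, ⟨⟨-, hT1, hTn⟩, hsT⟩, hmin⟩ :=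
    hKc.exists_isMinOn hKne continuous_snd.continuousOn
  simp only [mem_ofPred_eq] at hT1 hTn hsT
  refine ⟨s, T, ?_, hsT, ?_⟩
  · refine lt_of_le_of_ne hT1 ?_
    rintro rfl
    rw [h1] at hsT
    exact hfree _ hsT.symm
  · intro a b h0 hab he
    rcases le_or_gt (b - a) 1 with h2 | h2
    · exact hne a b h0 h2 he
    · have ha' : Γ a = (h ^ ⌊a⌋) (Γ (Int.fract a)) := by
        rw [← hk, Int.fract_add_floor]
      have hb' : Γ b = (h ^ ⌊a⌋) (Γ (Int.fract a + (b - a))) := by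
        rw [← hk, Int.fract]; ring_nf
      rw [ha', hb'] at he
      have := hmin (a := (Int.fract a, b - a))
        ⟨⟨⟨Int.fract_nonneg a, (Int.fract_lt_one a).le⟩, h2.le, by simpa using by linarith⟩,
          (h ^ ⌊a⌋).injective he⟩
      exact absurd this (not_le.2 hab)

/-- A fixed point free orientation preserving homeomorphism of the plane has
no periodic points. -/
theorem stmt0 (h : Homeomorph Plane Plane)
    (hfree : ∀ x : Plane, h x ≠ x) (hor : IsotopicToId ⇑h) :
    ∀ n : ℕ, 1 ≤ n → ∀ x : Plane, (⇑h)^[n] x ≠ x := by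
  intro n hn p hp
  obtain ⟨Γ, hΓ, h1, hΓp, hne, hk⟩ := exists_equivariant_curve h hfree p
  obtain ⟨s, T, hT, hs, hmin⟩ := exists_least_return h hfree n hn p hp Γ hΓ h1 hΓp hne hk
  exact false_of_least_return h hfree hor Γ hΓ h1 T hT hmin s hs
end

section
/- Let h be a Brouwer homeomorphism of ℝ². Then every point of ℝ² is wandering under h: for every x ∈ ℝ² there exists an open neighborhood U of x such that hⁿ(U) ∩ U = ∅ for all n ≠ 0. -/
open Set Metric Topology

/-- A Brouwer homeomorphism: fixed point free, and orientation preserving in the sense of being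
isotopic to the identity. -/
def Brouwer (f : Plane ≃ₜ Plane) : Prop := (∀ x, f x ≠ x) ∧ IsotopicToId ⇑f

/-! ### Isotopies -/

lemma IsotopicToId.comp {f g : Plane ≃ₜ Plane} (hg : IsotopicToId ⇑g) (hf : IsotopicToId ⇑f) :
    IsotopicToId ⇑(f.trans g) := by
  obtain ⟨F, hF, hF1, hF2, hF3⟩ := hf
  obtain ⟨G, hG, hG1, hG2, hG3⟩ := hg
  refine ⟨fun t x => G t (F t x), ?_, ?_, ?_, ?_⟩
  · exact hG.comp (continuous_fst.prodMk hF)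
  · intro t
    obtain ⟨a, ha⟩ := hF1 t
    obtain ⟨b, hb⟩ := hG1 t
    exact ⟨a.trans b, by ext x : 1; simp [ha, hb]⟩
  · ext x : 1; simp [hF2, hG2]
  · ext x : 1; simp [hF3, hG3]

/-- The inverse of `f` is joined to the identity by running an isotopy of `f` backwards,
precomposed with the inverse of `f`. -/
lemma IsotopicToId.symm {f : Plane ≃ₜ Plane} (hf : IsotopicToId ⇑f) :
    IsotopicToId ⇑f.symm := by
  obtain ⟨F, hF, hF1, hF2, hF3⟩ := hf
  refine ⟨fun t x => F (1 - t) (f.symm x), ?_, ?_, ?_, ?_⟩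
  · exact hF.comp ((continuous_const.sub continuous_fst).prodMk
      (f.symm.continuous.comp continuous_snd))
  · intro t
    obtain ⟨a, ha⟩ := hF1 (1 - t)
    exact ⟨f.symm.trans a, by ext x : 1; simp [ha]⟩
  · ext x : 1; simp [hF3]
  · ext x : 1; simp [hF2]

lemma IsotopicToId.conj {f : Plane ≃ₜ Plane} (hf : IsotopicToId ⇑f) (h : Plane ≃ₜ Plane) :
    IsotopicToId ⇑((h.symm.trans f).trans h) := by
  obtain ⟨F, hF, hF1, hF2, hF3⟩ := hf
  refine ⟨fun t x => h (F t (h.symm x)), ?_, ?_, ?_, ?_⟩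
  · exact h.continuous.comp
      (hF.comp (continuous_fst.prodMk (h.symm.continuous.comp continuous_snd)))
  · intro t
    obtain ⟨a, ha⟩ := hF1 t
    exact ⟨(h.symm.trans a).trans h, by ext x : 1; simp [ha]⟩
  · ext x : 1; simp [hF2]
  · ext x : 1; simp [hF3]

lemma Brouwer.symm {f : Plane ≃ₜ Plane} (hf : Brouwer f) : Brouwer f.symm :=
  ⟨fun x hx => hf.1 x (by rw [← hx, f.apply_symm_apply]; exact hx.symm), hf.2.symm⟩

/-- Composing with a homeomorphism supported in a set disjoint from its image creates no fixed
point. -/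
lemma Brouwer.perturb {f φ : Plane ≃ₜ Plane} (hf : Brouwer f) (hφ : IsotopicToId ⇑φ)
    {U : Set Plane} (hU : ∀ x ∉ U, φ x = x) (hfree : ∀ x ∈ U, f x ∉ U) :
    Brouwer (f.trans φ) := by
  refine ⟨fun x hx => ?_, hφ.comp hf.2⟩
  have hx' : φ (f x) = x := hx
  by_cases hxU : x ∈ U
  · rw [hU _ (hfree x hxU)] at hx'
    exact hf.1 x hx'
  · have : f x = x := φ.injective (hx'.trans (hU x hxU).symm)
    exact hf.1 x this

/-! ### Pushing points inside connected open sets -/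

/-- The map `x ↦ x + max 0 (1 - dist x p / δ) • v` is a homeomorphism for `‖v‖ < δ`, being a
perturbation of the identity by a contraction. -/
lemma exists_bump_homeo (p v : Plane) {δ : ℝ} (hv : ‖v‖ < δ) :
    ∃ g : Plane ≃ₜ Plane, ∀ x, g x = x + max 0 (1 - dist x p / δ) • v := by
  have hδ : 0 < δ := (norm_nonneg v).trans_lt hv
  have hc : ‖v‖ / δ < 1 := (div_lt_one hδ).2 hv
  let c : NNReal := ⟨‖v‖ / δ, by positivity⟩
  have H : ApproximatesLinearOn (fun x : Plane => x + max 0 (1 - dist x p / δ) • v)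
      ((ContinuousLinearEquiv.refl ℝ Plane : Plane ≃L[ℝ] Plane) : Plane →L[ℝ] Plane) univ c := by
    intro x _ y _
    have e : (x + max 0 (1 - dist x p / δ) • v) - (y + max 0 (1 - dist y p / δ) • v)
        - ((ContinuousLinearEquiv.refl ℝ Plane : Plane ≃L[ℝ] Plane) : Plane →L[ℝ] Plane) (x - y)
        = (max 0 (1 - dist x p / δ) - max 0 (1 - dist y p / δ)) • v := by
      simp only [ContinuousLinearEquiv.coe_coe, ContinuousLinearEquiv.refl_apply, sub_smul]
      abel
    rw [e, norm_smul, Real.norm_eq_abs]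
    have h1 : |max 0 (1 - dist x p / δ) - max 0 (1 - dist y p / δ)| ≤ ‖x - y‖ / δ := by
      rw [max_comm 0, max_comm 0]
      refine (abs_max_sub_max_le_abs _ _ _).trans ?_ |>.trans (?_ : |dist x p - dist y p| / δ ≤ _)
      · rw [show (1 - dist x p / δ) - (1 - dist y p / δ) = -((dist x p - dist y p) / δ) by ring,
          abs_neg, abs_div, abs_of_pos hδ]
      · rw [← dist_eq_norm]
        gcongr
        exact abs_dist_sub_le _ _ _
    calc _ ≤ ‖x - y‖ / δ * ‖v‖ := by gcongr
      _ = (c : ℝ) * ‖x - y‖ := by change _ = ‖v‖ / δ * _; ring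
  refine ⟨H.toHomeomorph _ (Or.inr ?_), fun x => rfl⟩
  have hN : ‖((ContinuousLinearEquiv.refl ℝ Plane).symm : Plane →L[ℝ] Plane)‖₊ = 1 := by
    have : ((ContinuousLinearEquiv.refl ℝ Plane).symm : Plane →L[ℝ] Plane)
      = ContinuousLinearMap.id ℝ Plane := rfl
    rw [this]
    exact nnnorm_one
  rw [hN, inv_one]
  exact_mod_cast hc

lemma exists_local_push (p q : Plane) {δ : ℝ} (h : dist q p < δ) :
    ∃ φ : Plane ≃ₜ Plane, IsotopicToId ⇑φ ∧ (∀ x ∉ ball p δ, φ x = x) ∧ φ p = q := by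
  have hδ : 0 < δ := dist_nonneg.trans_lt h
  -- Clamping `t` to `[0, 1]` keeps every stage of the isotopy a homeomorphism.
  have key : ∀ t : ℝ, ‖(max 0 (min 1 t)) • (q - p)‖ < δ := fun t => by
    rw [norm_smul, Real.norm_eq_abs, abs_of_nonneg (le_max_left _ _), ← dist_eq_norm]
    have h1 : max 0 (min 1 t) ≤ (1 : ℝ) := max_le zero_le_one (min_le_left _ _)
    nlinarith [dist_nonneg (x := q) (y := p)]
  choose g hg using fun t => exists_bump_homeo p _ (key t)
  refine ⟨g 1, ⟨fun t => g t, ?_, fun t => ⟨g t, rfl⟩, ?_, rfl⟩, ?_, ?_⟩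
  · simp only [hg]
    fun_prop
  · ext x : 1
    simp [hg]
  · intro x hx
    rw [mem_ball, not_lt] at hx
    have : 1 - dist x p / δ ≤ 0 := by
      rw [sub_nonpos, le_div_iff₀ hδ]; linarith
    rw [hg, max_eq_left this]
    simp
  · rw [hg]
    simp

/-- Isotopically trivial homeomorphisms supported in a connected open set act transitively on
it. -/
lemma exists_push {U : Set Plane} (hU : IsOpen U) (hc : IsPreconnected U) {p q : Plane}
    (hp : p ∈ U) (hq : q ∈ U) :
    ∃ φ : Plane ≃ₜ Plane, IsotopicToId ⇑φ ∧ (∀ x ∉ U, φ x = x) ∧ φ p = q := by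
  refine hc.induction₂ (fun p q => ∃ φ : Plane ≃ₜ Plane, IsotopicToId ⇑φ ∧
    (∀ x ∉ U, φ x = x) ∧ φ p = q) ?_ ?_ ?_ hp hq
  · intro x hx
    obtain ⟨δ, hδ, hsub⟩ := Metric.isOpen_iff.1 hU x hx
    filter_upwards [mem_nhdsWithin_of_mem_nhds (ball_mem_nhds x hδ)] with y hy
    obtain ⟨φ, h1, h2, h3⟩ := exists_local_push x y hy
    exact ⟨φ, h1, fun z hz => h2 z fun h => hz (hsub h), h3⟩
  · rintro x y z - - - ⟨φ, h1, h2, h3⟩ ⟨ψ, k1, k2, k3⟩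
    refine ⟨φ.trans ψ, k1.comp h1, fun w hw => ?_, ?_⟩
    · rw [Homeomorph.trans_apply, h2 w hw, k2 w hw]
    · rw [Homeomorph.trans_apply, h3, k3]
  · rintro x y - - ⟨φ, h1, h2, h3⟩
    exact ⟨φ.symm, h1.symm, fun w hw => by rw [Homeomorph.symm_apply_eq, h2 w hw],
      by rw [Homeomorph.symm_apply_eq, h3]⟩

/-! ### Orbits returning to a free set -/

/-- Closing an orbit: if a point of a connected open set `U` disjoint from its image returns to
`U`, some Brouwer homeomorphism has a periodic point of period at most the return time. -/
lemma return_lemma {f : Plane ≃ₜ Plane} (hf : Brouwer f) {U : Set Plane} (hU : IsOpen U)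
    (hc : IsPreconnected U) (hfree : ∀ x ∈ U, f x ∉ U) {a : Plane} (ha : a ∈ U) {k : ℕ}
    (hk : 0 < k) (hak : f^[k] a ∈ U) :
    ∃ g : Plane ≃ₜ Plane, Brouwer g ∧ ∃ j, 0 < j ∧ j ≤ k ∧ g^[j] a = a := by
  classical
  have hex : ∃ k, 0 < k ∧ f^[k] a ∈ U := ⟨k, hk, hak⟩
  obtain ⟨hm0, hmU⟩ := Nat.find_spec hex
  have hmin : ∀ i, 0 < i → i < Nat.find hex → f^[i] a ∉ U :=
    fun i hi hi' h => Nat.find_min hex hi' ⟨hi, h⟩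
  have hmk : Nat.find hex ≤ k := Nat.find_le ⟨hk, hak⟩
  generalize Nat.find hex = m at hm0 hmU hmin hmk
  obtain ⟨φ, h1, h2, h3⟩ := exists_push hU hc hmU ha
  refine ⟨f.trans φ, hf.perturb h1 h2 hfree, m, hm0, hmk, ?_⟩
  obtain ⟨m, rfl⟩ := Nat.exists_eq_succ_of_ne_zero hm0.ne'
  have key : ∀ i ≤ m, (f.trans φ)^[i] a = f^[i] a := by
    intro i
    induction i with
    | zero => intro _; rfl
    | succ i ih =>
      intro hi
      rw [Function.iterate_succ_apply', ih (by omega), Homeomorph.trans_apply,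
        ← Function.iterate_succ_apply' f, h2 _ (hmin _ (by omega) (by omega))]
  rw [Function.iterate_succ_apply', key m le_rfl, Homeomorph.trans_apply,
    ← Function.iterate_succ_apply' f, h3]

/-! ### Period two -/

lemma no_period_two {f : Plane ≃ₜ Plane} (hf : Brouwer f) (x : Plane) : f (f x) ≠ x := by
  intro hx
  obtain ⟨hfree, F, hF, hF1, hF0, hFf⟩ := hf
  have hinj : ∀ t, Function.Injective (F t) := fun t => by
    obtain ⟨g, hg⟩ := hF1 t
    rw [← hg]; exact g.injective
  let C : Plane → ℂ := fun v => (v 0 : ℂ) + (v 1 : ℂ) * Complex.I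
  have hCc : Continuous C := by fun_prop
  have hC0 : ∀ v, C v = 0 → v = 0 := by
    intro v hv
    have h0 := congrArg Complex.re hv
    have h1 := congrArg Complex.im hv
    simp [C] at h0 h1
    ext i
    fin_cases i <;> simpa
  have hCneg : ∀ v, C (-v) = -C v := fun v => by simp [C]; ring
  let G : C(ℝ × Plane, ℂ) := ⟨fun p => C (F p.1 (f p.2) - F p.1 p.2), by
    refine hCc.comp (Continuous.sub ?_ hF)
    exact hF.comp (continuous_fst.prodMk (f.continuous.comp continuous_snd))⟩
  have hG0 : ∀ p, G p ≠ 0 := fun p hp =>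
    hfree p.2 (hinj p.1 (sub_eq_zero.1 (hC0 _ hp)))
  obtain ⟨L, ⟨-, hL⟩, -⟩ := Complex.isCoveringMapOn_exp.existsUnique_continuousMap_lifts G
    (a₀ := (0, x)) (e₀ := Complex.log (G (0, x))) (Complex.exp_log (hG0 _)) hG0
  have hL' : ∀ p, Complex.exp (L p) = G p := fun p => congrFun hL p
  have hconst : ∀ {X : Type} [TopologicalSpace X] [PreconnectedSpace X] (u : X → ℂ) (c : ℂ),
      Continuous u → (∀ a, Complex.exp (u a) = c) → ∀ a b, u a = u b := by
    intro X _ _ u c hu h a b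
    exact Complex.isCoveringMap_exp.const_of_comp hu (fun a b => by
      simp only [Subtype.mk.injEq]; rw [h a, h b]) a b
  have A := hconst (fun p : Plane => L (1, p) - L (0, f p)) 1 (by fun_prop) (fun p => by
    rw [Complex.exp_sub, hL', hL', div_eq_one_iff_eq (hG0 _)]
    simp [G, hF0, hFf]) x (f x)
  have E : ∀ t : ℝ, Complex.exp (L (t, f x) - L (t, x)) = -1 := fun t => by
    rw [Complex.exp_sub, hL', hL', div_eq_iff (hG0 _)]
    simp only [G, ContinuousMap.coe_mk, hx]
    rw [← neg_sub, hCneg]; ring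
  have B := hconst (fun t : ℝ => L (t, f x) - L (t, x)) (-1) (by fun_prop) E 0 1
  simp only [hx] at A B
  have D : L (0, f x) - L (0, x) = 0 := by linear_combination (B - A) / 2
  have := E 0
  rw [D, Complex.exp_zero] at this
  norm_num at this

/-! ### Shortening the period -/

/-- If `f` maps a compact `K` off a closed `L`, it maps a neighbourhood of `K` off a neighbourhood
of `L`. -/
lemma exists_thickening_disjoint {X : Type*} [MetricSpace X] {f : X → X} (hf : Continuous f)
    {K L : Set X}
    (hK : IsCompact K) (hL : IsClosed L) (h : ∀ a ∈ K, f a ∉ L) :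
    ∃ δ > 0, ∀ a ∈ thickening δ K, f a ∉ thickening δ L := by
  have hd : Disjoint (f '' K) L := by
    rw [Set.disjoint_left]; rintro _ ⟨a, ha, rfl⟩; exact h a ha
  obtain ⟨δ, hδ, hdis⟩ := hd.exists_thickenings (hK.image hf) hL
  have ho : IsOpen (f ⁻¹' thickening δ (f '' K)) := isOpen_thickening.preimage hf
  have hKo : K ⊆ f ⁻¹' thickening δ (f '' K) :=
    image_subset_iff.1 (self_subset_thickening hδ _)
  obtain ⟨δ', hδ', hsub⟩ := hK.exists_thickening_subset_open ho hKo
  refine ⟨min δ δ', lt_min hδ hδ', fun a ha hfa => ?_⟩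
  exact Set.disjoint_left.1 hdis (hsub (thickening_mono (min_le_right _ _) _ ha))
    (thickening_mono (min_le_left _ _) _ hfa)

/-- The case where the far end `z = γ s` of the half-open free segment `γ '' [0, s)` starting at
`x` is mapped into that segment. -/
lemma contact {n : ℕ} (hn : 3 ≤ n)
    (ih : ∀ k, 0 < k → k < n → ∀ g : Plane ≃ₜ Plane, Brouwer g → ∀ y, g^[k] y ≠ y)
    {f : Plane ≃ₜ Plane} (hf : Brouwer f) {x e : Plane} (hx : f^[n] x = x) {s t : ℝ}
    (ht : 0 ≤ t) (hts : t < s)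
    (hst : f (AffineMap.lineMap x e s) = AffineMap.lineMap x e t)
    (hmin : ∀ a b : ℝ, 0 ≤ a → a < s → 0 ≤ b → b < s →
      f (AffineMap.lineMap x e a) ≠ AffineMap.lineMap x e b) : False := by
  set γ : ℝ → Plane := fun r => AffineMap.lineMap x e r with hγ
  change f (γ s) = γ t at hst
  have hγc : Continuous γ := AffineMap.lineMap_continuous
  have hγ0 : γ 0 = x := AffineMap.lineMap_apply_zero _ _
  let K : ℝ → Set Plane := fun r => γ '' Icc 0 r
  have hKc : ∀ r, IsCompact (K r) := fun r => isCompact_Icc.image hγc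
  have hKconv : ∀ r, Convex ℝ (K r) := fun r => (convex_Icc 0 r).affine_image _
  have hKmono : ∀ {r r'}, r ≤ r' → K r ⊆ K r' := fun h => image_mono (Icc_subset_Icc_right h)
  have hmem : ∀ {r r' : ℝ}, 0 ≤ r → r ≤ r' → γ r ∈ K r' := fun h h' => mem_image_of_mem _ ⟨h, h'⟩
  have hfree : ∀ r < s, ∀ a ∈ K r, f a ∉ K r := by
    rintro r hr _ ⟨a, ha, rfl⟩ ⟨b, hb, hab⟩
    exact hmin a b ha.1 (ha.2.trans_lt hr) hb.1 (hb.2.trans_lt hr) hab.symm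
  have hcont : Continuous f := f.continuous
  -- A free connected open set sees no return in fewer than `n` steps.
  have hretU : ∀ U : Set Plane, IsOpen U → Convex ℝ U → (∀ a ∈ U, f a ∉ U) →
      ∀ k, 0 < k → k < n → ∀ a ∈ U, f^[k] a ∉ U := by
    intro U hU hc hU' k hk hkn a ha hak
    obtain ⟨g, hg, j, hj, hjk, hga⟩ := return_lemma hf hU hc.isPreconnected hU' ha hk hak
    exact ih j hj (by omega) g hg a hga
  have hret : ∀ r < s, ∀ k, 0 < k → k < n → ∀ a ∈ K r, f^[k] a ∉ K r := by
    intro r hr k hk hkn a ha hak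
    obtain ⟨δ, hδ, hd⟩ := exists_thickening_disjoint hcont (hKc r) (hKc r).isClosed (hfree r hr)
    exact hretU _ isOpen_thickening ((hKconv r).thickening δ) hd k hk hkn a
      (self_subset_thickening hδ _ ha) (self_subset_thickening hδ _ hak)
  have hp2 : ∀ y, f (f y) ≠ y := no_period_two hf
  -- The image of `w = γ t` is off the whole closed segment.
  have hfw : f (γ t) ∉ K s := by
    rintro ⟨r, hr, hrw⟩
    rcases hr.2.lt_or_eq with h | h
    · exact hmin t r ht hts hr.1 h hrw.symm
    · rw [h] at hrw
      exact hp2 (γ s) (by rw [hst, ← hrw])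
  have hwK2 : ∀ a ∈ K s, f (f a) ∉ ({γ t} : Set Plane) := by
    rintro _ ⟨r, hr, rfl⟩ h
    have h1 : f (f (γ r)) = γ t := h
    have h2 : f (γ r) = γ s := f.injective (h1.trans hst.symm)
    rcases hr.2.lt_or_eq with h | h
    · refine hret (max r t) (max_lt h hts) 2 (by omega) (by omega) (γ r)
        (hmem hr.1 (le_max_left _ _)) ?_
      change f (f (γ r)) ∈ _
      rw [h1]
      exact hmem ht (le_max_right _ _)
    · rw [h] at h2; exact hf.1 _ h2
  obtain ⟨ε₁, hε₁, h₁⟩ := exists_thickening_disjoint hcont (K := {γ t}) isCompact_singleton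
    (hKc s).isClosed (by rintro a rfl; exact hfw)
  obtain ⟨ε₂, hε₂, h₂⟩ := exists_thickening_disjoint (f := fun a => f (f a)) (hcont.comp hcont)
    (hKc s) isClosed_singleton hwK2
  -- A disc about `w` avoiding the orbit of `x`, except possibly `x` itself.
  obtain ⟨ε₃, hε₃, h₃⟩ : ∃ ε > 0, ∀ i, 0 < i → i < n → f^[i] x ∉ ball (γ t) ε := by
    have hfin : (((fun i => f^[i] x) '' Ioo 0 n)).Finite := (Set.finite_Ioo 0 n).image _
    have hw : γ t ∈ ((fun i => f^[i] x) '' Ioo 0 n)ᶜ := by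
      rintro ⟨i, hi, hiw⟩
      refine hret t hts i hi.1 hi.2 x (hγ0 ▸ hmem le_rfl ht) ?_
      change f^[i] x = _ at hiw
      rw [hiw]
      exact hmem ht le_rfl
    obtain ⟨ε, hε, hsub⟩ := Metric.isOpen_iff.1 hfin.isClosed.isOpen_compl _ hw
    exact ⟨ε, hε, fun i hi hin hb => hsub hb ⟨i, ⟨hi, hin⟩, rfl⟩⟩
  obtain ⟨ε, hε, hεle₁, hεle₂, hεle₃⟩ : ∃ ε > 0, ε ≤ ε₁ ∧ ε ≤ ε₂ ∧ ε ≤ ε₃ :=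
    ⟨min ε₁ (min ε₂ ε₃), lt_min hε₁ (lt_min hε₂ hε₃), min_le_left _ _,
      (min_le_right _ _).trans (min_le_left _ _), (min_le_right _ _).trans (min_le_right _ _)⟩
  set B := ball (γ t) ε with hB
  have hBN : B ⊆ thickening ε (K s) := ball_subset_thickening (hmem ht hts.le) ε
  have hfB : ∀ a ∈ B, f a ∉ thickening ε (K s) := fun a ha h =>
    h₁ a (by rw [thickening_singleton]; exact ball_subset_ball hεle₁ ha)
      (thickening_mono hεle₁ _ h)
  have hf2B : ∀ a ∈ thickening ε (K s), f (f a) ∉ B := fun a ha h =>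
    h₂ a (thickening_mono hεle₂ _ ha)
      (by rw [thickening_singleton]; exact ball_subset_ball hεle₂ h)
  have hBorb : ∀ i, 0 < i → i < n → f^[i] x ∉ B := fun i hi hin h =>
    h₃ i hi hin (ball_subset_ball hεle₃ h)
  -- Stop the segment just before `s`, at a point whose image is already in the disc `B`.
  obtain ⟨r, hrt, hrs, hrB⟩ : ∃ r, t ≤ r ∧ r < s ∧ f (γ r) ∈ B := by
    have hev : ∀ᶠ r in 𝓝 s, f (γ r) ∈ B := by
      refine (hcont.comp hγc).continuousAt.eventually_mem ?_
      change B ∈ 𝓝 (f (γ s))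
      rw [hst]
      exact ball_mem_nhds _ hε
    have hev2 : ∀ᶠ r in 𝓝[<] s, f (γ r) ∈ B ∧ t < r ∧ r < s :=
      (hev.filter_mono nhdsWithin_le_nhds).and (Ioo_mem_nhdsLT hts)
    obtain ⟨r, h1, h2, h3⟩ := hev2.exists
    exact ⟨r, h2.le, h3, h1⟩
  have hr0 : 0 ≤ r := ht.trans hrt
  obtain ⟨δ₁, hδ₁, k₁⟩ := exists_thickening_disjoint hcont (hKc r) (hKc r).isClosed (hfree r hrs)
  obtain ⟨δ₂, hδ₂, k₂⟩ := exists_thickening_disjoint (f := fun a => f (f a)) (hcont.comp hcont)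
    (hKc r) (hKc r).isClosed (hret r hrs 2 (by omega) (by omega))
  obtain ⟨δ, hδ, hδle₁, hδle₂, hδle₃⟩ : ∃ δ > 0, δ ≤ δ₁ ∧ δ ≤ δ₂ ∧ δ ≤ ε :=
    ⟨min δ₁ (min δ₂ ε), lt_min hδ₁ (lt_min hδ₂ hε), min_le_left _ _,
      (min_le_right _ _).trans (min_le_left _ _), (min_le_right _ _).trans (min_le_right _ _)⟩
  set U := thickening δ (K r) with hU
  have hUo : IsOpen U := isOpen_thickening
  have hUconv : Convex ℝ U := (hKconv r).thickening δ
  have hKU : K r ⊆ U := self_subset_thickening hδ _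
  have hUN : U ⊆ thickening ε (K s) :=
    (thickening_mono hδle₃ _).trans (thickening_subset_of_subset _ (hKmono hrs.le))
  have hfU : ∀ a ∈ U, f a ∉ U := fun a ha h =>
    k₁ a (thickening_mono hδle₁ _ ha) (thickening_mono hδle₁ _ h)
  have hf2U : ∀ a ∈ U, f (f a) ∉ U := fun a ha h =>
    k₂ a (thickening_mono hδle₂ _ ha) (thickening_mono hδle₂ _ h)
  have hxU : x ∈ U := hKU (hγ0 ▸ hmem le_rfl hr0)
  have hUorb : ∀ i, 0 < i → i < n → f^[i] x ∉ U := fun i hi hin =>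
    hretU U hUo hUconv hfU i hi hin x hxU
  -- Three pushes: `x` to `w` in `U`, then `w` to `f (γ r)` in `B`, then `f (γ r)` to `f x`
  -- in `f '' U`.
  obtain ⟨φ₁, i₁, s₁, p₁⟩ := exists_push hUo hUconv.isPreconnected hxU (hKU (hmem ht hrt))
  obtain ⟨φ₂, i₂, s₂, p₂⟩ := exists_push (isOpen_ball : IsOpen B)
    (convex_ball _ _).isPreconnected (mem_ball_self hε) hrB
  obtain ⟨ψ, i₃, s₃, p₃⟩ := exists_push hUo hUconv.isPreconnected (hKU (hmem hr0 le_rfl)) hxU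
  let φ₃ : Plane ≃ₜ Plane := (f.symm.trans ψ).trans f
  have s₃' : ∀ y ∉ f '' U, φ₃ y = y := by
    intro y hy
    have : f.symm y ∉ U := fun h => hy ⟨_, h, f.apply_symm_apply y⟩
    simp [φ₃, s₃ _ this]
  have g₁ : Brouwer (f.trans φ₁) := hf.perturb i₁ s₁ hfU
  have g₂ : Brouwer ((f.trans φ₁).trans φ₂) := by
    refine g₁.perturb i₂ s₂ fun a ha h => ?_
    rw [Homeomorph.trans_apply, s₁ _ fun h' => hfB a ha (hUN h')] at h
    exact hfB a ha (hBN h)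
  have g₃ : Brouwer (((f.trans φ₁).trans φ₂).trans φ₃) := by
    refine g₂.perturb (i₃.conj f) s₃' ?_
    rintro _ ⟨b, hb, rfl⟩ h
    rw [Homeomorph.trans_apply, Homeomorph.trans_apply, s₁ _ (hf2U b hb),
      s₂ _ (hf2B b (hUN hb))] at h
    obtain ⟨c, hc, hcb⟩ := h
    rw [f.injective hcb] at hc
    exact hfU b hb hc
  have horb : ∀ j, j + 2 ≤ n → (((f.trans φ₁).trans φ₂).trans φ₃)^[j] (f x) = f^[j + 1] x := by
    intro j
    induction j with
    | zero => intro _; rfl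
    | succ j ihj =>
      intro hj
      rw [Function.iterate_succ_apply', ihj (by omega)]
      simp only [Homeomorph.trans_apply]
      rw [← Function.iterate_succ_apply' f, s₁ _ (hUorb _ (by omega) (by omega)),
        s₂ _ (hBorb _ (by omega) (by omega)), s₃']
      rintro ⟨b, hb, hbx⟩
      rw [Function.iterate_succ_apply' f] at hbx
      rw [f.injective hbx] at hb
      exact hUorb _ (by omega) (by omega) hb
  obtain ⟨m, rfl⟩ : ∃ m, n = m + 2 := ⟨n - 2, by omega⟩
  refine ih (m + 1) (by omega) (by omega) _ g₃ (f x) ?_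
  rw [Function.iterate_succ_apply', horb m le_rfl]
  simp only [Homeomorph.trans_apply]
  rw [← Function.iterate_succ_apply' f, hx, p₁, p₂]
  simp [φ₃, p₃]

lemma no_periodic (n : ℕ) : 0 < n → ∀ f : Plane ≃ₜ Plane, Brouwer f → ∀ x, f^[n] x ≠ x := by
  induction n using Nat.strong_induction_on with
  | _ n ih =>
  intro hn f hf x hx
  rcases (by omega : n = 1 ∨ n = 2 ∨ 3 ≤ n) with rfl | rfl | h3
  · exact hf.1 x hx
  · exact no_period_two hf x hx
  have ih' : ∀ k, 0 < k → k < n → ∀ g : Plane ≃ₜ Plane, Brouwer g → ∀ y, g^[k] y ≠ y :=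
    fun k hk hkn => ih k hkn hk
  have hγc : Continuous (fun r : ℝ => (AffineMap.lineMap x (f x) r : Plane)) :=
    AffineMap.lineMap_continuous
  -- The contacts of the segment `[x, f x]` with its image; a first one minimises `max`.
  let C : Set (ℝ × ℝ) := (Icc 0 1 ×ˢ Icc 0 1) ∩
    {p | f (AffineMap.lineMap x (f x) p.1) = AffineMap.lineMap x (f x) p.2}
  have hC : IsCompact C := (isCompact_Icc.prod isCompact_Icc).inter_right
    (isClosed_eq (f.continuous.comp (hγc.comp continuous_fst)) (hγc.comp continuous_snd))
  have hne : C.Nonempty := ⟨(0, 1), by simp [C]⟩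
  obtain ⟨⟨s, t⟩, ⟨⟨⟨hs0, hs1⟩, ht0, ht1⟩, hst⟩, hmin⟩ := hC.exists_isMinOn hne
    (f := fun p : ℝ × ℝ => max p.1 p.2) (by fun_prop)
  simp only [mem_ofPred_eq] at hs0 hs1 ht0 ht1 hst
  have hmin' : ∀ a b : ℝ, 0 ≤ a → a < max s t → 0 ≤ b → b < max s t →
      f (AffineMap.lineMap x (f x) a) ≠ AffineMap.lineMap x (f x) b := by
    intro a b ha ha' hb hb' hab
    have hmax : max s t ≤ 1 := max_le hs1 ht1
    have h : max s t ≤ max a b := hmin (show (a, b) ∈ C from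
      ⟨⟨⟨ha, ha'.le.trans hmax⟩, hb, hb'.le.trans hmax⟩, hab⟩)
    exact absurd (max_lt ha' hb') h.not_gt
  rcases lt_trichotomy t s with h | h | h
  · rw [max_eq_left h.le] at hmin'
    exact contact h3 ih' hf hx ht0 h hst hmin'
  · rw [h] at hst
    exact hf.1 _ hst
  · rw [max_eq_right h.le] at hmin'
    refine contact h3 ih' hf.symm (e := f x) ?_ hs0 h (by rw [← hst, f.symm_apply_apply]) ?_
    · have : Function.LeftInverse (f.symm)^[n] f^[n] :=
        Function.LeftInverse.iterate f.symm_apply_apply n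
      have h' := this x
      rwa [hx] at h'
    · intro a b ha ha' hb hb' hab
      rw [Homeomorph.symm_apply_eq] at hab
      exact hmin' b a hb hb' ha ha' hab.symm

/-- Every point of the plane is wandering under a Brouwer homeomorphism. -/
theorem stmt1 (h : Homeomorph Plane Plane)
    (hfree : ∀ x : Plane, h x ≠ x) (hor : IsotopicToId ⇑h) :
    ∀ x : Plane, ∃ U : Set Plane, IsOpen U ∧ x ∈ U ∧
      ∀ n : ℤ, n ≠ 0 → (⇑(h.toEquiv ^ n) '' U) ∩ U = ∅ := by
  intro x
  obtain ⟨δ, hδ, hd⟩ := exists_thickening_disjoint h.continuous (K := {x}) (L := {x})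
    isCompact_singleton isClosed_singleton (by rintro _ rfl; exact hfree _)
  rw [thickening_singleton] at hd
  have key : ∀ k : ℕ, 0 < k → ∀ y ∈ ball x δ, (h.toEquiv ^ k) y ∉ ball x δ := by
    intro k hk y hy hky
    rw [← Equiv.Perm.iterate_eq_pow] at hky
    obtain ⟨g, hg, j, hj, -, hgy⟩ := return_lemma ⟨hfree, hor⟩ isOpen_ball
      (convex_ball x δ).isPreconnected hd hy hk hky
    exact no_periodic j hj g hg y hgy
  refine ⟨ball x δ, isOpen_ball, mem_ball_self hδ, fun n hn => ?_⟩
  rw [Set.eq_empty_iff_forall_notMem]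
  rintro _ ⟨⟨y, hy, rfl⟩, hny⟩
  obtain ⟨k, rfl | rfl⟩ := n.eq_nat_or_neg
  · rw [zpow_natCast] at hny
    exact key k (by omega) y hy hny
  · refine key k (by omega) _ hny ?_
    rw [zpow_neg, zpow_natCast, ← Equiv.Perm.mul_apply, mul_inv_cancel, Equiv.Perm.one_apply]
    exact hy
end

section
/- Let h be a Brouwer homeomorphism of ℝ² and let D ⊂ ℝ² be a closed disc that is free (D ∩ h(D) = ∅) or critical (int D ∩ h(int D) = ∅ but D ∩ h(D) ≠ ∅). Then D ∩ hⁿ(D) = ∅ for every integer n with |n| ≥ 2. -/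
namespace BrouwerDisc

open Set Metric Topology

/-! ### Variation of the logarithm along a path -/

theorem exists_log {A : Type*} [TopologicalSpace A] [SimplyConnectedSpace A]
    [LocallyPathConnectedSpace A] {f : A → ℂ} (hf : Continuous f) (h0 : ∀ a, f a ≠ 0) :
    ∃ θ : A → ℂ, Continuous θ ∧ ∀ a, Complex.exp (θ a) = f a := by
  obtain ⟨a₀⟩ : Nonempty A := inferInstance
  obtain ⟨F, ⟨-, hF⟩, -⟩ := Complex.isCoveringMapOn_exp.existsUnique_continuousMap_lifts
    ⟨f, hf⟩ (a₀ := a₀) (Complex.exp_log (h0 a₀)) (fun a => h0 a)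
  exact ⟨F, F.continuous, fun a => congrFun hF a⟩

/-- A continuous function with constant exponential is constant: the fibres of `exp` are
discrete. -/
theorem const_of_exp_const {A : Type*} [TopologicalSpace A] [PreconnectedSpace A]
    {θ : A → ℂ} (hθ : Continuous θ) {σ : ℂ} (h : ∀ a, Complex.exp (θ a) = σ) (a b : A) :
    θ a = θ b :=
  Complex.isCoveringMap_exp.const_of_comp hθ
    (fun x y => Subtype.ext ((h x).trans (h y).symm)) a b

/-- `LogVar γ w`: a continuous logarithm of `γ` along `[0, 1]` changes by `w`. For a path of
nonzero numbers, `w` is `log |γ 1| - log |γ 0|` plus `i` times the variation of the argument. -/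
def LogVar (γ : ℝ → ℂ) (w : ℂ) : Prop :=
  ∃ θ : ℝ → ℂ, Continuous θ ∧ (∀ s, Complex.exp (θ s) = γ s) ∧ θ 1 - θ 0 = w

theorem LogVar.unique {γ : ℝ → ℂ} {w w' : ℂ} (h : LogVar γ w) (h' : LogVar γ w') : w = w' := by
  obtain ⟨θ, hθ, he, rfl⟩ := h
  obtain ⟨θ', hθ', he', rfl⟩ := h'
  have := const_of_exp_const (θ := fun s => θ s - θ' s) (hθ.sub hθ') (σ := 1) (fun a => by
    rw [Complex.exp_sub, he, he']
    exact div_self (by rw [← he]; exact Complex.exp_ne_zero _)) 1 0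
  linear_combination this

/-- The variation is unchanged along a homotopy whose two end points keep a constant ratio. -/
theorem LogVar.homotopy {H : ℝ × ℝ → ℂ} (hH : Continuous H) (h0 : ∀ p, H p ≠ 0) {σ : ℂ}
    (hσ : ∀ t, H (t, 1) = σ * H (t, 0)) {γ₀ γ₁ : ℝ → ℂ} (e₀ : ∀ s, H (0, s) = γ₀ s)
    (e₁ : ∀ s, H (1, s) = γ₁ s) {w : ℂ} (hw : LogVar γ₀ w) :
    LogVar γ₁ w := by
  obtain ⟨Λ, hΛ, hexp⟩ := exists_log hH h0
  have hl : ∀ t, Continuous fun s : ℝ => Λ (t, s) := fun t => by fun_prop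
  have hc := const_of_exp_const (θ := fun t : ℝ => Λ (t, 1) - Λ (t, 0)) (by fun_prop) (σ := σ)
    (fun t => by
      rw [Complex.exp_sub, hexp, hexp, hσ, mul_div_assoc, div_self (h0 _), mul_one]) 1 0
  have : w = Λ (0, 1) - Λ (0, 0) :=
    hw.unique ⟨fun s => Λ (0, s), hl 0, fun s => (hexp _).trans (e₀ s), rfl⟩
  exact ⟨fun s => Λ (1, s), hl 1, fun s => (hexp _).trans (e₁ s), hc.trans this.symm⟩

/-! ### Invariance of domain in the plane -/

/-- Clamping a real number to `[0, 1]`, so that homotopies can be indexed by `ℝ`. -/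
noncomputable def clamp (t : ℝ) : ℝ := max 0 (min 1 t)

theorem continuous_clamp : Continuous clamp := by unfold clamp; fun_prop
theorem clamp_nonneg (t : ℝ) : 0 ≤ clamp t := le_max_left _ _
theorem clamp_le_one (t : ℝ) : clamp t ≤ 1 := max_le zero_le_one (min_le_left _ _)
theorem clamp_zero : clamp 0 = 0 := by simp [clamp]
theorem clamp_one : clamp 1 = 1 := by simp [clamp]

/-- The loop `s ↦ exp (2πis)`. -/
noncomputable def circ (s : ℝ) : ℂ := Complex.exp (2 * Real.pi * s * Complex.I)

theorem continuous_circ : Continuous circ := by unfold circ; fun_prop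

theorem norm_circ (s : ℝ) : ‖circ s‖ = 1 := by
  have := Complex.norm_exp_ofReal_mul_I (2 * Real.pi * s)
  simpa [circ] using this

theorem circ_ne_zero (s : ℝ) : circ s ≠ 0 := Complex.exp_ne_zero _

theorem circ_add_half (s : ℝ) : circ (s + 1 / 2) = -circ s := by
  unfold circ
  rw [show (2 * Real.pi * ((s + 1 / 2 : ℝ) : ℂ) * Complex.I)
    = 2 * Real.pi * s * Complex.I + Real.pi * Complex.I by push_cast; ring,
    Complex.exp_add, Complex.exp_pi_mul_I]
  ring

theorem circ_one : circ 1 = circ 0 := by simp [circ]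

/-- An injective continuous map sends the centre of a closed disc to an interior point of the image.
Comparing `Φ (c + a u)` with `Φ (c - b u)` deforms the loop `Φ (c + ρ u) - Φ c` to an odd loop,
whose variation is nonzero; if `w` near `Φ c` were not in the image, the loop
`Φ (c + ρ u) - w` would be contractible in `ℂ \ {0}`. -/
theorem mem_interior_image_of_injOn {Φ : ℂ → ℂ} (hΦ : Continuous Φ) {c : ℂ} {ρ : ℝ} (hρ : 0 < ρ)
    (hinj : InjOn Φ (closedBall c ρ)) : Φ c ∈ interior (Φ '' closedBall c ρ) := by
  have := continuous_clamp
  have := continuous_circ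
  have hmem : ∀ (a s : ℝ), |a| ≤ ρ → c + a * circ s ∈ closedBall c ρ := by
    intro a s ha
    simpa [norm_circ] using ha
  -- `Φ c` has a positive distance to the image of the boundary circle
  obtain ⟨ε, hε, hdist⟩ : ∃ ε > 0, ∀ s, ε ≤ ‖Φ (c + ρ * circ s) - Φ c‖ := by
    obtain ⟨x, hx, hmin⟩ := (isCompact_sphere c ρ).exists_isMinOn
      (NormedSpace.sphere_nonempty.2 hρ.le) (f := fun x => ‖Φ x - Φ c‖) (by fun_prop)
    refine ⟨‖Φ x - Φ c‖, ?_, fun s => hmin ?_⟩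
    · rw [gt_iff_lt, norm_pos_iff, sub_ne_zero]
      intro h
      have := hinj (sphere_subset_closedBall hx) (mem_closedBall_self hρ.le) h
      rw [this, mem_sphere, dist_self] at hx
      exact hρ.ne hx
    · simp [norm_circ, hρ.le]
  by_contra hcon
  rw [mem_interior_iff_mem_nhds, Metric.mem_nhds_iff] at hcon
  push Not at hcon
  obtain ⟨w, hw, hwn⟩ := not_subset.1 (hcon ε hε)
  rw [mem_ball, dist_eq_norm] at hw
  -- the loop at time `0` of the first homotopy is odd, hence has nonzero variation
  set H : ℝ × ℝ → ℂ := fun p => Φ (c + ((ρ * (1 + clamp p.1) / 2 : ℝ) : ℂ) * circ p.2)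
    - Φ (c + ((-(ρ * (1 - clamp p.1) / 2) : ℝ) : ℂ) * circ p.2) with hHdef
  have hH : Continuous H := by fun_prop
  have hH0 : ∀ p, H p ≠ 0 := by
    rintro ⟨t, s⟩ h
    have h0 := clamp_nonneg t
    have h1 := clamp_le_one t
    have h2 := mul_le_mul_of_nonneg_left h1 hρ.le
    have h3 := mul_nonneg hρ.le h0
    have := hinj (hmem _ s (by rw [abs_le]; constructor <;> linarith))
      (hmem _ s (by rw [abs_le]; constructor <;> linarith)) (sub_eq_zero.1 h)
    have := mul_right_cancel₀ (circ_ne_zero s) (add_left_cancel this)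
    have := Complex.ofReal_injective this
    dsimp only at this
    linarith
  have hodd : ∀ s, H (0, s + 1 / 2) = -H (0, s) := by
    intro s
    simp only [hHdef, circ_add_half, clamp_zero]
    push_cast
    ring_nf
  obtain ⟨κ, hκ, hvar⟩ : ∃ κ : ℂ, κ ≠ 0 ∧ LogVar (fun s => H (0, s)) κ := by
    obtain ⟨Λ, hΛ, hexp⟩ := exists_log (f := fun s : ℝ => H (0, s)) (by fun_prop) (fun s => hH0 _)
    have he : ∀ s, Complex.exp (Λ (s + 1 / 2) - Λ s) = -1 := fun s => by
      rw [Complex.exp_sub, hexp, hexp, hodd, neg_div, div_self (hH0 _)]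
    have hc := const_of_exp_const (θ := fun s : ℝ => Λ (s + 1 / 2) - Λ s) (by fun_prop)
      he (1 / 2) 0
    have h2 := he 0
    norm_num at hc h2
    refine ⟨2 * (Λ (1 / 2) - Λ 0), ?_, Λ, hΛ, hexp, by linear_combination hc⟩
    intro h
    have h3 : Λ (1 / 2) - Λ 0 = 0 := by simpa using h
    rw [h3] at h2
    norm_num at h2
  have v1 : LogVar (fun s => Φ (c + ρ * circ s) - Φ c) κ :=
    hvar.homotopy hH hH0 (σ := 1) (fun t => by simp [hHdef, circ_one]) (fun s => rfl)
      (fun s => by norm_num [hHdef, clamp_one])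
  have v2 : LogVar (fun s => Φ (c + ρ * circ s) - w) κ := by
    refine v1.homotopy
      (H := fun p => Φ (c + ρ * circ p.2) - Φ c - (clamp p.1 : ℂ) * (w - Φ c))
      (by fun_prop) ?_ (σ := 1) (fun t => by simp [circ_one]) (fun s => by simp [clamp_zero])
      (fun s => by simp [clamp_one])
    rintro ⟨t, s⟩ h
    have h1 := hdist s
    rw [sub_eq_zero.1 h, norm_mul, Complex.norm_real, Real.norm_of_nonneg (clamp_nonneg t)] at h1
    have := mul_le_mul_of_nonneg_right (clamp_le_one t) (norm_nonneg (w - Φ c))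
    linarith
  have v3 : LogVar (fun _ => Φ c - w) κ := by
    refine v2.homotopy
      (H := fun p => Φ (c + ((ρ * (1 - clamp p.1) : ℝ) : ℂ) * circ p.2) - w)
      (by fun_prop) ?_ (σ := 1) (fun t => by simp [circ_one]) (fun s => by simp [clamp_zero])
      (fun s => by simp [clamp_one])
    rintro ⟨t, s⟩ h
    have h0 := clamp_nonneg t
    have h1 := clamp_le_one t
    refine hwn ⟨_, hmem _ s ?_, sub_eq_zero.1 h⟩
    rw [abs_of_nonneg (mul_nonneg hρ.le (by linarith))]
    nlinarith
  have hne : Φ c - w ≠ 0 := fun h =>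
    hwn ⟨c, mem_closedBall_self hρ.le, sub_eq_zero.1 h⟩
  exact hκ (v3.unique ⟨fun _ => Complex.log (Φ c - w), continuous_const,
    fun _ => Complex.exp_log hne, sub_self _⟩)

/-! ### Points of period two -/

/-- A fixed point free homeomorphism of the plane isotopic to the identity. -/
def IsBrouwer (h : Plane ≃ₜ Plane) : Prop := (∀ x, h x ≠ x) ∧ IsotopicToId h

/-- An isometric identification of `Plane` with `ℂ`. -/
noncomputable def toC : Plane ≃ₗᵢ[ℝ] ℂ := Complex.orthonormalBasisOneI.repr.symm

/-- If `h` exchanges `a` and `b`, the isotopy transports the path `(α, h ∘ α)` to `(h ∘ α, h² ∘ α)`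
in the space of pairs of distinct points, where `α` goes from `a` to `b`. The logarithm `θ` of
`h x - x` therefore changes as much from `a` to `b` as from `b` to `a`, so that `θ a = θ b`,
although `h a - a = -(h b - b)`. -/
theorem no_period_two {h : Plane ≃ₜ Plane} (hh : IsBrouwer h) {a b : Plane} (hab : h a = b)
    (hba : h b = a) : False := by
  obtain ⟨hfix, F, hF, hFh, hF0, hF1⟩ := hh
  have hcont := h.continuous
  have hinj : ∀ t x y, F t x = F t y → x = y := fun t x y hxy => by
    obtain ⟨g, hg⟩ := hFh t
    rw [← hg] at hxy
    exact g.injective hxy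
  have hC : ∀ x y : Plane, x ≠ y → toC (x - y) ≠ 0 := fun x y hxy h0 =>
    hxy (sub_eq_zero.1 (toC.map_eq_zero_iff.1 h0))
  obtain ⟨θ, hθ, he⟩ := exists_log (f := fun x => toC (h x - x)) (by fun_prop)
    (fun x => hC _ _ (hfix x))
  set α : ℝ → Plane := fun s => AffineMap.lineMap a b s with hαdef
  have hα : Continuous α := by fun_prop
  have hα0 : α 0 = a := by simp [hαdef]
  have hα1 : α 1 = b := by simp [hαdef]
  have v0 : LogVar (fun s => toC (h (α s) - α s)) (θ b - θ a) :=
    ⟨fun s => θ (α s), by fun_prop, fun s => he _, by simp only [hα0, hα1]⟩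
  have v1 : LogVar (fun s => toC (h (h (α s)) - h (α s))) (θ a - θ b) :=
    ⟨fun s => θ (h (α s)), by fun_prop, fun s => he _, by simp only [hα0, hα1, hab, hba]⟩
  have hH : Continuous fun p : ℝ × ℝ => toC (F p.1 (h (α p.2)) - F p.1 (α p.2)) := by
    have h1 : Continuous fun p : ℝ × ℝ => F p.1 (h (α p.2)) :=
      hF.comp (by fun_prop : Continuous fun p : ℝ × ℝ => (p.1, h (α p.2)))
    have h2 : Continuous fun p : ℝ × ℝ => F p.1 (α p.2) :=
      hF.comp (by fun_prop : Continuous fun p : ℝ × ℝ => (p.1, α p.2))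
    fun_prop
  have v2 := v0.homotopy (γ₁ := fun s => toC (h (h (α s)) - h (α s))) hH (fun p => hC _ _ fun hp => hfix _ (hinj _ _ _ hp)) (σ := -1)
    (fun t => by
      simp only [hα0, hα1, hab, hba]
      rw [neg_one_mul, ← map_neg, neg_sub])
    (fun s => by simp only [hF0, id]) (fun s => by simp only [hF1])
  have h1 := v1.unique v2
  have h2 : θ a = θ b := by linear_combination h1 / 2
  have h3 : toC (b - a) = toC (a - b) := by
    have ha := he a
    have hb := he b
    simp only [hab, hba] at ha hb
    rw [← ha, ← hb, h2]
  have h4 : b - a = a - b := toC.injective h3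
  have h5 : b = a := by
    have : (2 : ℝ) • (b - a) = 0 := by
      rw [two_smul]; nth_rw 2 [h4]; simp
    simpa [sub_eq_zero] using this
  exact hfix a (hab.trans h5)

/-! ### Perturbations supported in free sets -/

theorem isotopicToId_trans {h φ : Plane ≃ₜ Plane} (hh : IsotopicToId h) (hφ : IsotopicToId φ) :
    IsotopicToId (h.trans φ) := by
  obtain ⟨G, hG, hGh, hG0, hG1⟩ := hφ
  obtain ⟨F, hF, hFh, hF0, hF1⟩ := hh
  refine ⟨fun t x => G t (F t x), hG.comp (continuous_fst.prodMk hF), fun t => ?_, ?_, ?_⟩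
  · obtain ⟨g, hg⟩ := hGh t
    obtain ⟨f, hf⟩ := hFh t
    exact ⟨f.trans g, by ext1 x; simp [hg, hf]⟩
  · funext x; simp [hG0, hF0]
  · funext x; simp [hG1, hF1]

theorem isotopicToId_id : IsotopicToId (id : Plane → Plane) :=
  ⟨fun _ x => x, continuous_snd, fun _ => ⟨Homeomorph.refl _, rfl⟩, rfl, rfl⟩

/-- The centre of a disc can be moved anywhere in the disc by the map `x ↦ x + lam x • v`, where
`lam` is a bump function of slope `1 / r`. It is a Lipschitz perturbation of the identity with
constant `‖v‖ / r < 1`, hence a homeomorphism. -/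
theorem exists_push_ball (c : Plane) {r : ℝ} (hr : 0 < r) {q : Plane} (hq : q ∈ ball c r) :
    ∃ φ : Plane ≃ₜ Plane, IsotopicToId φ ∧ (∀ x, x ∉ ball c r → φ x = x) ∧ φ c = q := by
  set v : Plane := q - c with hv
  have hvr : ‖v‖ / r < 1 := by
    rw [div_lt_one hr, hv, ← dist_eq_norm]; exact hq
  set lam : Plane → ℝ := fun x => max 0 (1 - dist x c / r) with hlam
  have hlamc : Continuous lam := by fun_prop
  have hlip : ∀ x y, |lam x - lam y| ≤ dist x y / r := by
    intro x y
    calc |lam x - lam y| ≤ |(1 - dist x c / r) - (1 - dist y c / r)| :=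
          by simpa [hlam, max_comm] using abs_max_sub_max_le_abs (1 - dist x c / r)
              (1 - dist y c / r) 0
      _ = |dist y c - dist x c| / r := by
          rw [← abs_of_pos hr, ← abs_div, abs_of_pos hr]; congr 1; ring
      _ ≤ dist x y / r := by
          gcongr
          rw [dist_comm x y]
          exact abs_dist_sub_le y x c
  set f : ℝ → Plane → Plane := fun t x => x + (clamp t * lam x) • v with hf
  have happ : ∀ t, ApproximatesLinearOn (f t)
      ((ContinuousLinearEquiv.refl ℝ Plane : Plane ≃L[ℝ] Plane) : Plane →L[ℝ] Plane) univ
      (Real.toNNReal (‖v‖ / r)) := by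
    intro t x _ y _
    have h0 : f t x - f t y - (x - y) = (clamp t * (lam x - lam y)) • v := by
      simp only [hf]; module
    rw [Real.coe_toNNReal _ (by positivity)]
    have h1 : ‖f t x - f t y - (x - y)‖ ≤ ‖v‖ / r * ‖x - y‖ := by
      rw [h0, norm_smul, norm_mul, Real.norm_of_nonneg (clamp_nonneg t), Real.norm_eq_abs]
      have h2 := hlip x y
      rw [dist_eq_norm] at h2
      calc clamp t * |lam x - lam y| * ‖v‖ ≤ 1 * (‖x - y‖ / r) * ‖v‖ := by
            gcongr
            exact clamp_le_one t
        _ = ‖v‖ / r * ‖x - y‖ := by ring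
    exact h1
  have hconst : Subsingleton Plane ∨ Real.toNNReal (‖v‖ / r) <
      ‖((ContinuousLinearEquiv.refl ℝ Plane).symm : Plane →L[ℝ] Plane)‖₊⁻¹ := by
    right
    have : ‖((ContinuousLinearEquiv.refl ℝ Plane).symm : Plane →L[ℝ] Plane)‖₊ = 1 := by
      apply NNReal.eq
      exact ContinuousLinearMap.norm_id
    rw [this, inv_one]
    simpa using hvr
  have hcoe : ∀ t, ⇑((happ t).toHomeomorph (f t) hconst) = f t := fun t => rfl
  refine ⟨(happ 1).toHomeomorph (f 1) hconst, ?_, ?_, ?_⟩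
  · refine ⟨f, ?_, fun t => ⟨_, hcoe t⟩, ?_, rfl⟩
    · have := continuous_clamp
      simp only [hf]; fun_prop
    · funext x; simp [hf, clamp_zero]
  · intro x hx
    rw [mem_ball, not_lt] at hx
    have : lam x = 0 := max_eq_left (by rw [sub_nonpos, one_le_div hr]; exact hx)
    rw [hcoe]
    simp [hf, this]
  · rw [hcoe]
    simp [hf, hlam, clamp_one, hv]

/-- An open connected set is homogeneous under homeomorphisms supported in it and isotopic to the
identity: the orbit of `p` is open and relatively closed. -/
theorem exists_push {U : Set Plane} (hU : IsOpen U) (hc : IsPreconnected U) {p q : Plane}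
    (hp : p ∈ U) (hq : q ∈ U) :
    ∃ φ : Plane ≃ₜ Plane, IsotopicToId φ ∧ (∀ x, x ∉ U → φ x = x) ∧ φ p = q := by
  set R : Set Plane := {q | ∃ φ : Plane ≃ₜ Plane, IsotopicToId φ ∧ (∀ x, x ∉ U → φ x = x) ∧
    φ p = q} with hR
  have step : ∀ y ∈ R, ∀ r > 0, ball y r ⊆ U → ball y r ⊆ R := by
    rintro y ⟨φ, h1, h2, h3⟩ r hr hb z hz
    obtain ⟨ψ, k1, k2, k3⟩ := exists_push_ball y hr hz
    refine ⟨φ.trans ψ, isotopicToId_trans h1 k1, fun x hx => ?_, ?_⟩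
    · simp [h2 x hx, k2 x (fun hh => hx (hb hh))]
    · simp [h3, k3]
  have hpR : p ∈ R := ⟨Homeomorph.refl _, isotopicToId_id, fun _ _ => rfl, rfl⟩
  have hRU : R ⊆ U := by
    rintro y ⟨φ, -, h2, h3⟩
    by_contra hy
    exact hy (φ.injective ((h2 y hy).trans h3.symm) ▸ hp)
  have hRo : IsOpen R := by
    rw [Metric.isOpen_iff]
    intro y hy
    obtain ⟨r, hr, hb⟩ := Metric.isOpen_iff.1 hU y (hRU hy)
    exact ⟨r, hr, step y hy r hr hb⟩
  refine hc.subset_of_closure_inter_subset hRo ⟨p, hp, hpR⟩ ?_ hq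
  rintro y ⟨hyc, hyU⟩
  obtain ⟨r, hr, hb⟩ := Metric.isOpen_iff.1 hU y hyU
  obtain ⟨z, hz, hyz⟩ := Metric.mem_closure_iff.1 hyc (r / 2) (half_pos hr)
  refine step z hz (r / 2) (half_pos hr) (fun x hx => hb ?_) hyz
  rw [mem_ball] at hx ⊢
  rw [dist_comm] at hyz
  linarith [dist_triangle x z y]

/-- Composing with a homeomorphism supported in a free set creates no fixed point. -/
theorem IsBrouwer.perturb {h φ : Plane ≃ₜ Plane} (hh : IsBrouwer h) (hφ : IsotopicToId φ)
    {U : Set Plane} (hU : ∀ x ∈ U, h x ∉ U) (hs : ∀ x, x ∉ U → φ x = x) :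
    IsBrouwer (h.trans φ) := by
  refine ⟨fun x hx => ?_, isotopicToId_trans hh.2 hφ⟩
  have hx : φ (h x) = x := hx
  by_cases hxU : h x ∈ U
  · refine hU x ?_ hxU
    by_contra hn
    rw [φ.injective (hx.trans (hs x hn).symm)] at hxU
    exact hn hxU
  · exact hh.1 x ((hs _ hxU).symm.trans hx)

/-! ### Free sets and returns -/

theorem exists_preconnected_nhds {K V : Set Plane} (hKc : IsPreconnected K) (hne : K.Nonempty)
    (hV : IsOpen V) (hKV : K ⊆ V) :
    ∃ U, IsOpen U ∧ IsPreconnected U ∧ K ⊆ U ∧ U ⊆ V := by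
  obtain ⟨p, hp⟩ := hne
  exact ⟨connectedComponentIn V p, hV.connectedComponentIn, isPreconnected_connectedComponentIn,
    hKc.subset_connectedComponentIn hp hKV, connectedComponentIn_subset V p⟩

theorem exists_free_nhds (h : Plane ≃ₜ Plane) {K : Set Plane} (hK : IsCompact K)
    (hfree : ∀ x ∈ K, h x ∉ K) :
    ∃ V, IsOpen V ∧ K ⊆ V ∧ ∀ x ∈ V, h x ∉ V := by
  have hd : Disjoint K (h '' K) := by
    rw [Set.disjoint_right]
    rintro _ ⟨x, hx, rfl⟩
    exact hfree x hx
  obtain ⟨V, W, hV, hW, hKV, hKW, hVW⟩ :=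
    SeparatedNhds.of_isCompact_isCompact hK (hK.image h.continuous) hd
  refine ⟨V ∩ h ⁻¹' W, hV.inter (hW.preimage h.continuous),
    subset_inter hKV (image_subset_iff.1 hKW), ?_⟩
  rintro x ⟨-, hxW⟩ ⟨hxV, -⟩
  exact Set.disjoint_left.1 hVW hxV hxW

theorem notMem_closure_of_free (f : Plane ≃ₜ Plane) {O : Set Plane} (hO : IsOpen O)
    (hfree : ∀ x ∈ O, f x ∉ O) :
    (∀ x ∈ O, f x ∉ closure O) ∧ (∀ x ∈ closure O, f x ∉ O) := by
  have hd : Disjoint (f '' O) O := by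
    rw [Set.disjoint_left]
    rintro _ ⟨x, hx, rfl⟩
    exact hfree x hx
  refine ⟨fun x hx hc => ?_, fun x hx hfx => ?_⟩
  · exact Set.disjoint_left.1 (hd.closure_right (f.isOpenMap O hO)) (mem_image_of_mem f hx) hc
  · obtain ⟨z, hz, hzO⟩ := mem_closure_iff.1 hx _ (hO.preimage f.continuous) hfx
    exact hfree z hzO hz

/-- Some fixed point free homeomorphism isotopic to the identity has a point of (not necessarily
least) period `n`. -/
def HasPeriod (n : ℕ) : Prop := ∃ g, IsBrouwer g ∧ ∃ y, g^[n] y = y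

/-- If an orbit returns to a free open connected set after `m` iterations, moving the first return
back to its starting point inside that set closes the orbit without creating fixed points. -/
theorem hasPeriod_of_return {h : Plane ≃ₜ Plane} (hh : IsBrouwer h) {U : Set Plane}
    (hU : IsOpen U) (hc : IsPreconnected U) (hfree : ∀ x ∈ U, h x ∉ U) {x : Plane} (hx : x ∈ U)
    {m : ℕ} (hm : 1 ≤ m) (hret : h^[m] x ∈ U) : ∃ j, 1 ≤ j ∧ j ≤ m ∧ HasPeriod j := by
  classical
  have hex : ∃ j, 1 ≤ j ∧ h^[j] x ∈ U := ⟨m, hm, hret⟩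
  obtain ⟨hj1, hjU⟩ := Nat.find_spec hex
  have hjm : Nat.find hex ≤ m := Nat.find_min' hex ⟨hm, hret⟩
  have hmin : ∀ i < Nat.find hex, 1 ≤ i → h^[i] x ∉ U := fun i hi h1 hiU =>
    Nat.find_min hex hi ⟨h1, hiU⟩
  generalize Nat.find hex = j at *
  obtain ⟨φ, hφ, hs, hφx⟩ := exists_push hU hc hjU hx
  refine ⟨j, hj1, hjm, h.trans φ, hh.perturb hφ hfree hs, x, ?_⟩
  have key : ∀ i < j, (h.trans φ)^[i] x = h^[i] x := by
    intro i
    induction i with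
    | zero => intro _; rfl
    | succ i ih =>
      intro hi
      rw [Function.iterate_succ_apply', ih (by omega), Function.iterate_succ_apply']
      have := hs _ (hmin (i + 1) hi (by omega))
      rwa [Function.iterate_succ_apply'] at this
  obtain ⟨i, rfl⟩ : ∃ i, j = i + 1 := ⟨j - 1, by omega⟩
  rw [Function.iterate_succ_apply', key i (by omega)]
  rw [Function.iterate_succ_apply'] at hφx
  exact hφx

theorem hasPeriod_of_return_compact {h : Plane ≃ₜ Plane} (hh : IsBrouwer h) {K : Set Plane}
    (hK : IsCompact K) (hc : IsPreconnected K) (hfree : ∀ x ∈ K, h x ∉ K) {x : Plane}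
    (hx : x ∈ K) {m : ℕ} (hm : 1 ≤ m) (hret : h^[m] x ∈ K) :
    ∃ j, 1 ≤ j ∧ j ≤ m ∧ HasPeriod j := by
  obtain ⟨V, hV, hKV, hVf⟩ := exists_free_nhds h hK hfree
  obtain ⟨U, hU, hUc, hKU, hUV⟩ := exists_preconnected_nhds hc ⟨x, hx⟩ hV hKV
  exact hasPeriod_of_return hh hU hUc (fun z hz hz' => hVf z (hUV hz) (hUV hz')) (hKU hx) hm
    (hKU hret)

/-! ### Absence of periodic points -/

theorem eq_or_eq_or_mem_ball {c u v z : Plane} {r : ℝ} (hr : 0 < r) (hu : u ∈ closedBall c r)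
    (hv : v ∈ closedBall c r) (hz : z ∈ segment ℝ u v) : z = u ∨ z = v ∨ z ∈ ball c r := by
  by_cases huv : u = v
  · subst huv
    rw [segment_same] at hz
    exact Or.inl hz
  rw [← insert_endpoints_openSegment] at hz
  rcases hz with hz | hz | hz
  · exact Or.inl hz
  · exact Or.inr (Or.inl hz)
  · have := (strictConvex_closedBall ℝ c r).openSegment_subset hu hv huv hz
    rw [interior_closedBall c hr.ne'] at this
    exact Or.inr (Or.inr this)

theorem isCompact_segment (u v : Plane) : IsCompact (segment ℝ u v) := by
  rw [segment_eq_image_lineMap]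
  exact isCompact_Icc.image (by fun_prop)

theorem isPreconnected_segment (u v : Plane) : IsPreconnected (segment ℝ u v) :=
  (convex_segment u v).isPreconnected

/-- Around every point there is a round disc with free interior that contains some `y` together
with its image. Such a disc is found by minimising `max (dist y x₀) (dist (h y) x₀)`. -/
theorem exists_critical_ball {h : Plane ≃ₜ Plane} (hfix : ∀ x, h x ≠ x) (x₀ : Plane) :
    ∃ r > 0, ∃ y, y ∈ closedBall x₀ r ∧ h y ∈ closedBall x₀ r ∧
      ∀ z ∈ ball x₀ r, h z ∉ ball x₀ r := by
  have hcont := h.continuous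
  obtain ⟨y, hy⟩ := Continuous.exists_forall_le
    (f := fun z : Plane => max (dist z x₀) (dist (h z) x₀)) (by fun_prop)
    (Filter.tendsto_atTop_mono (fun z => le_max_left _ _) (tendsto_dist_right_cocompact_atTop x₀))
  refine ⟨max (dist y x₀) (dist (h y) x₀), ?_, y,
    mem_closedBall.2 (le_max_left _ _), mem_closedBall.2 (le_max_right _ _), ?_⟩
  · by_contra hn
    have h1 := max_le_iff.1 (not_lt.1 hn)
    have h2 := dist_le_zero.1 h1.1
    have h3 := dist_le_zero.1 h1.2
    exact hfix y (h3.trans h2.symm)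
  · intro z hz hz'
    exact absurd (hy z) (not_le.2 (max_lt hz hz'))

/-- A set obtained from a free open set by adding one adherent point is free. -/
theorem free_insert {h : Plane ≃ₜ Plane} (hfix : ∀ x, h x ≠ x) {O K : Set Plane} (hO : IsOpen O)
    (hfree : ∀ x ∈ O, h x ∉ O) {p : Plane} (hp : p ∈ closure O) (hK : ∀ z ∈ K, z = p ∨ z ∈ O) :
    ∀ z ∈ K, h z ∉ K := by
  obtain ⟨h1, h2⟩ := notMem_closure_of_free h hO hfree
  intro z hz hz'
  rcases hK z hz with rfl | hzO
  · rcases hK _ hz' with h3 | h3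
    · exact hfix _ h3
    · exact h2 _ hp h3
  · rcases hK _ hz' with h3 | h3
    · exact h1 z hzO (h3 ▸ hp)
    · exact hfree z hzO h3

/-- A point `x₀` of least possible period `n ≥ 3` gives one of period `n - 1`: in a critical disc
around `x₀`, the paths `[x₀, h y]` and `h [y, x₀]` join `x₀` to `h x₀` through `h y`; pushing along
them in turn replaces the arrival at `x₀` by an arrival at `h x₀`. -/
theorem hasPeriod_pred {n : ℕ} (hn : 3 ≤ n) (hmin : ∀ m, 1 ≤ m → m < n → ¬ HasPeriod m)
    (hper : HasPeriod n) : HasPeriod (n - 1) := by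
  obtain ⟨h, hh, x₀, hx₀⟩ := hper
  obtain ⟨r, hr, y, hy, hhy, hfree⟩ := exists_critical_ball hh.1 x₀
  set O := ball x₀ r with hOdef
  have hO : IsOpen O := isOpen_ball
  have hclO : closure O = closedBall x₀ r := closure_ball x₀ hr.ne'
  have hx₀O : x₀ ∈ O := mem_ball_self hr
  set J := segment ℝ x₀ y with hJ
  set K₁ := segment ℝ x₀ (h y) with hK₁
  set K₂ := h '' J with hK₂
  have hJO : ∀ z ∈ J, z = y ∨ z ∈ O := fun z hz => by
    rcases eq_or_eq_or_mem_ball hr (mem_closedBall_self hr.le) hy hz with rfl | h1 | h1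
    exacts [Or.inr hx₀O, Or.inl h1, Or.inr h1]
  have hK₁O : ∀ z ∈ K₁, z = h y ∨ z ∈ O := fun z hz => by
    rcases eq_or_eq_or_mem_ball hr (mem_closedBall_self hr.le) hhy hz with rfl | h1 | h1
    exacts [Or.inr hx₀O, Or.inl h1, Or.inr h1]
  rw [← hclO] at hy hhy
  have hJfree := free_insert hh.1 hO hfree hy hJO
  have hK₁free := free_insert hh.1 hO hfree hhy hK₁O
  have hK₂free : ∀ z ∈ K₂, h z ∉ K₂ := by
    rintro _ ⟨z, hz, rfl⟩ ⟨z', hz', he⟩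
    exact hJfree z hz (h.injective he ▸ hz')
  have hJc : IsCompact J := isCompact_segment _ _
  have hK₁c : IsCompact K₁ := isCompact_segment _ _
  have hK₂c : IsCompact K₂ := hJc.image h.continuous
  have hJp : IsPreconnected J := isPreconnected_segment _ _
  have hK₁p : IsPreconnected K₁ := isPreconnected_segment _ _
  have hK₂p : IsPreconnected K₂ := hJp.image _ h.continuous.continuousOn
  have hx₀J : x₀ ∈ J := left_mem_segment ℝ _ _
  have hx₀K₁ : x₀ ∈ K₁ := left_mem_segment ℝ _ _
  -- by minimality of `n`, the other points of the orbit avoid both paths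
  have hKx : ∀ K : Set Plane, IsCompact K → IsPreconnected K → (∀ z ∈ K, h z ∉ K) → x₀ ∈ K →
      ∀ k, 1 ≤ k → k < n → h^[k] x₀ ∉ K := by
    intro K hK hKp hKf hxK k hk hkn hmem
    obtain ⟨j, hj1, hjk, hj⟩ := hasPeriod_of_return_compact hh hK hKp hKf hxK hk hmem
    exact hmin j hj1 (by omega) hj
  have hP₁ : ∀ k, 2 ≤ k → k < n → h^[k] x₀ ∉ K₁ := fun k h2 hk =>
    hKx K₁ hK₁c hK₁p hK₁free hx₀K₁ k (by omega) hk
  have hP₂ : ∀ k, 2 ≤ k → k < n → h^[k] x₀ ∉ K₂ := by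
    rintro k h2 hk ⟨z, hz, he⟩
    obtain ⟨i, rfl⟩ : ∃ i, k = i + 1 := ⟨k - 1, by omega⟩
    rw [Function.iterate_succ_apply'] at he
    exact hKx J hJc hJp hJfree hx₀J i (by omega) (by omega) (h.injective he ▸ hz)
  -- again by minimality, `O` is disjoint from its second image, hence `h K₂` from `K₁`
  have hO2 : ∀ z ∈ O, (h.trans h) z ∉ O := by
    intro z hz hz'
    obtain ⟨j, hj1, hj2, hj⟩ := hasPeriod_of_return hh hO
      (convex_ball x₀ r).isPreconnected hfree hz (m := 2) (by norm_num) hz'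
    exact hmin j hj1 (by omega) hj
  obtain ⟨hO3, hO4⟩ := notMem_closure_of_free (h.trans h) hO hO2
  have hdis : Disjoint K₁ (h '' K₂) := by
    rw [Set.disjoint_right]
    rintro _ ⟨_, ⟨z, hz, rfl⟩, rfl⟩ hmem
    rcases hJO z hz with rfl | hzO
    · rcases hK₁O _ hmem with h1 | h1
      · exact hh.1 _ h1
      · exact hO4 _ hy h1
    · refine hO3 z hzO ?_
      rcases hK₁O _ hmem with h1 | h1
      · exact (show (h.trans h) z = h y from h1) ▸ hhy
      · exact subset_closure h1
  -- thin neighbourhoods of the two paths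
  set P : Set Plane := (fun k => h^[k] x₀) '' {k | 2 ≤ k ∧ k < n} with hP
  have hPc : IsClosed P :=
    (((Set.finite_lt_nat n).subset fun k hk => hk.2).image _).isClosed
  obtain ⟨W₁, W₂, hW₁, hW₂, hKW₁, hKW₂, hWW⟩ :=
    SeparatedNhds.of_isCompact_isCompact hK₁c (hK₂c.image h.continuous) hdis
  obtain ⟨F₁, hF₁, hKF₁, hF₁f⟩ := exists_free_nhds h hK₁c hK₁free
  obtain ⟨F₂, hF₂, hKF₂, hF₂f⟩ := exists_free_nhds h hK₂c hK₂free
  obtain ⟨N₁, hN₁, hN₁p, hKN₁, hN₁V⟩ := exists_preconnected_nhds hK₁p ⟨x₀, hx₀K₁⟩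
    ((hF₁.inter hW₁).inter hPc.isOpen_compl) (by
      refine subset_inter (subset_inter hKF₁ hKW₁) ?_
      rintro z hz ⟨k, hk, rfl⟩
      exact hP₁ k hk.1 hk.2 hz)
  obtain ⟨N₂, hN₂, hN₂p, hKN₂, hN₂V⟩ := exists_preconnected_nhds hK₂p
    ⟨h x₀, mem_image_of_mem h hx₀J⟩
    ((hF₂.inter (hW₂.preimage h.continuous)).inter hPc.isOpen_compl) (by
      refine subset_inter (subset_inter hKF₂ (image_subset_iff.1 hKW₂)) ?_
      rintro z hz ⟨k, hk, rfl⟩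
      exact hP₂ k hk.1 hk.2 hz)
  obtain ⟨φ₁, hφ₁, hs₁, hφ₁x⟩ := exists_push hN₁ hN₁p (hKN₁ hx₀K₁)
    (hKN₁ (right_mem_segment ℝ x₀ (h y)))
  obtain ⟨φ₂, hφ₂, hs₂, hφ₂x⟩ := exists_push hN₂ hN₂p
    (hKN₂ (mem_image_of_mem h (right_mem_segment ℝ x₀ y))) (hKN₂ (mem_image_of_mem h hx₀J))
  have hg₁ : IsBrouwer (h.trans φ₁) :=
    hh.perturb hφ₁ (fun z hz hz' => hF₁f z (hN₁V hz).1.1 (hN₁V hz').1.1) hs₁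
  have hg₂ : IsBrouwer ((h.trans φ₁).trans φ₂) := by
    refine hg₁.perturb hφ₂ (U := N₂) (fun z hz hz' => ?_) hs₂
    have hnot : h z ∉ N₁ := fun h1 =>
      Set.disjoint_left.1 hWW (hN₁V h1).1.2 (hN₂V hz).1.2
    have : φ₁ (h z) ∈ N₂ := hz'
    rw [hs₁ _ hnot] at this
    exact hF₂f z (hN₂V hz).1.1 (hN₂V this).1.1
  refine ⟨_, hg₂, h x₀, ?_⟩
  have key : ∀ j, j + 1 < n → ((h.trans φ₁).trans φ₂)^[j] (h x₀) = h^[j + 1] x₀ := by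
    intro j
    induction j with
    | zero => intro _; rfl
    | succ j ih =>
      intro hj
      have hmem : h^[j + 1 + 1] x₀ ∈ P := ⟨j + 1 + 1, ⟨by omega, hj⟩, rfl⟩
      rw [Function.iterate_succ_apply', ih (by omega)]
      change φ₂ (φ₁ (h (h^[j + 1] x₀))) = _
      rw [← Function.iterate_succ_apply' h, hs₁ _ (fun h1 => (hN₁V h1).2 hmem),
        hs₂ _ (fun h1 => (hN₂V h1).2 hmem)]
  obtain ⟨i, rfl⟩ : ∃ i, n = i + 2 := ⟨n - 2, by omega⟩
  change ((h.trans φ₁).trans φ₂)^[i + 1] (h x₀) = h x₀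
  rw [Function.iterate_succ_apply', key i (by omega)]
  change φ₂ (φ₁ (h (h^[i + 1] x₀))) = _
  rw [← Function.iterate_succ_apply' h, hx₀, hφ₁x, hφ₂x]

theorem not_hasPeriod (n : ℕ) (hn : 1 ≤ n) : ¬ HasPeriod n := by
  induction n using Nat.strong_induction_on with
  | _ n ih =>
    intro hper
    rcases (by omega : n = 1 ∨ n = 2 ∨ 3 ≤ n) with rfl | rfl | h3
    · obtain ⟨g, hg, y, hy⟩ := hper
      exact hg.1 y hy
    · obtain ⟨g, hg, y, hy⟩ := hper
      exact no_period_two hg (a := y) rfl hy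
    · exact ih (n - 1) (by omega) (by omega)
        (hasPeriod_pred h3 (fun m h1 hm => ih m hm h1) hper)

/-! ### Free and critical discs -/

/-- Iterates of a compact connected free set are disjoint from it. -/
theorem iterate_notMem {h : Plane ≃ₜ Plane} (hh : IsBrouwer h) {K : Set Plane}
    (hK : IsCompact K) (hc : IsPreconnected K) (hfree : ∀ x ∈ K, h x ∉ K) {x : Plane}
    (hx : x ∈ K) {m : ℕ} (hm : 1 ≤ m) : h^[m] x ∉ K := fun hret =>
  have ⟨j, hj, _, hper⟩ := hasPeriod_of_return_compact hh hK hc hfree hx hm hret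
  not_hasPeriod j hj hper

/-- Invariance of domain for a disc parametrised by the closed unit ball. -/
theorem ball_subset_interior {D : Set Plane} (e : (closedBall (0 : Plane) 1 : Set Plane) ≃ₜ D)
    (u : (closedBall (0 : Plane) 1 : Set Plane)) (hu : (u : Plane) ∈ ball (0 : Plane) 1) :
    (e u : Plane) ∈ interior D := by
  -- `e` composed with the radial retraction of the plane onto the disc
  obtain ⟨ret, hretc, hret⟩ : ∃ ret : Plane → (closedBall (0 : Plane) 1 : Set Plane),
      Continuous ret ∧ ∀ x (hx : x ∈ closedBall (0 : Plane) 1), ret x = ⟨x, hx⟩ := by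
    have hpos : ∀ x : Plane, 0 < max 1 ‖x‖ := fun x => lt_max_of_lt_left one_pos
    refine ⟨fun x => ⟨(max 1 ‖x‖)⁻¹ • x, ?_⟩, ?_, ?_⟩
    · rw [mem_closedBall_zero_iff, norm_smul, norm_inv, Real.norm_of_nonneg (hpos x).le,
        inv_mul_le_one₀ (hpos x)]
      exact le_max_right _ _
    · have h1 : Continuous fun x : Plane => max 1 ‖x‖ := by fun_prop
      exact ((h1.inv₀ fun x => (hpos x).ne').smul continuous_id).subtype_mk _
    · intro x hx
      rw [mem_closedBall_zero_iff] at hx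
      simp [max_eq_left hx]
  set Φ : ℂ → ℂ := fun z => toC (e (ret (toC.symm z))) with hΦ
  have hΦc : Continuous Φ := by fun_prop
  obtain ⟨ρ, hρ, hsub⟩ : ∃ ρ > 0, closedBall (u : Plane) ρ ⊆ closedBall (0 : Plane) 1 := by
    obtain ⟨ρ, hρ, hb⟩ := Metric.nhds_basis_closedBall.mem_iff.1 (isOpen_ball.mem_nhds hu)
    exact ⟨ρ, hρ, hb.trans ball_subset_closedBall⟩
  have hmem : ∀ z ∈ closedBall (toC u) ρ, toC.symm z ∈ closedBall (0 : Plane) 1 := by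
    intro z hz
    refine hsub ?_
    rw [mem_closedBall] at hz ⊢
    rwa [← toC.dist_map, toC.apply_symm_apply]
  have hinj : InjOn Φ (closedBall (toC u) ρ) := by
    intro z hz z' hz' heq
    have h1 := e.injective (Subtype.ext (toC.injective heq))
    rw [hret _ (hmem z hz), hret _ (hmem z' hz')] at h1
    exact toC.symm.injective (Subtype.ext_iff.1 h1)
  have hinner := mem_interior_image_of_injOn hΦc hρ hinj
  have hΦu : Φ (toC u) = toC (e u) := by
    simp only [hΦ, LinearIsometryEquiv.symm_apply_apply]
    rw [hret _ u.2]
  rw [hΦu] at hinner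
  have h2 : interior (Φ '' closedBall (toC u) ρ) ⊆ interior (toC '' D) := by
    refine interior_mono ?_
    rintro _ ⟨z, -, rfl⟩
    exact mem_image_of_mem _ (e _).2
  have h3 := h2 hinner
  have h4 : interior (toC '' D) = toC '' interior D :=
    (toC.toHomeomorph.image_interior D).symm
  rw [h4] at h3
  exact (toC.injective.mem_set_image).1 h3

/-- A chord of the disc joining `x` to `h^m x` would be free, because its relative interior lies in
the interior of the disc. -/
theorem disc_iterate_notMem {h : Plane ≃ₜ Plane} (hh : IsBrouwer h) {D : Set Plane}
    (e : (closedBall (0 : Plane) 1 : Set Plane) ≃ₜ D)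
    (hD : ∀ x ∈ interior D, h x ∉ interior D) {x : Plane} (hx : x ∈ D) {m : ℕ} (hm : 2 ≤ m) :
    h^[m] x ∉ D := by
  intro hmx
  obtain ⟨u, hu⟩ := e.surjective ⟨x, hx⟩
  obtain ⟨v, hv⟩ := e.surjective ⟨h^[m] x, hmx⟩
  have hseg : segment ℝ (u : Plane) v ⊆ closedBall (0 : Plane) 1 :=
    (convex_closedBall _ _).segment_subset u.2 v.2
  set S : Set (closedBall (0 : Plane) 1 : Set Plane) := Subtype.val ⁻¹' segment ℝ (u : Plane) v
    with hS
  have hSc : IsCompact S := by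
    rw [Subtype.isCompact_iff, Subtype.image_preimage_coe, inter_eq_right.2 hseg]
    exact isCompact_segment _ _
  have hSp : IsPreconnected S := by
    rw [← Topology.IsInducing.subtypeVal.isPreconnected_image, Subtype.image_preimage_coe,
      inter_eq_right.2 hseg]
    exact isPreconnected_segment _ _
  have hec : Continuous fun z => (e z : Plane) := by fun_prop
  set K : Set Plane := (fun z => (e z : Plane)) '' S with hK
  have hKD : ∀ z ∈ K, z = x ∨ z = h^[m] x ∨ z ∈ interior D := by
    rintro _ ⟨z, hz, rfl⟩
    rcases eq_or_eq_or_mem_ball one_pos u.2 v.2 hz with h1 | h1 | h1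
    · left; simp only [Subtype.ext h1, hu]
    · right; left; simp only [Subtype.ext h1, hv]
    · right; right; exact ball_subset_interior e z h1
  -- the disc is the closure of its interior
  have hcl : D ⊆ closure (interior D) := by
    intro z hz
    obtain ⟨w, hw⟩ := e.surjective ⟨z, hz⟩
    have hw1 : (w : Plane) ∈ closure (ball (0 : Plane) 1) := by
      rw [closure_ball _ one_ne_zero]; exact w.2
    have hw2 : w ∈ closure (Subtype.val ⁻¹' ball (0 : Plane) 1 :
        Set (closedBall (0 : Plane) 1 : Set Plane)) := by
      rw [closure_subtype, Subtype.image_preimage_coe,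
        inter_eq_right.2 ball_subset_closedBall]
      exact hw1
    have hw3 := map_mem_closure hec hw2 (t := interior D)
      (fun a ha => ball_subset_interior e a ha)
    simpa only [hw] using hw3
  obtain ⟨h1, h2⟩ := notMem_closure_of_free h isOpen_interior hD
  have hnp : ∀ k, 1 ≤ k → ∀ z, h^[k] z ≠ z := fun k hk z hz => not_hasPeriod k hk ⟨h, hh, z, hz⟩
  have hKsub : ∀ z ∈ K, z ∈ D := by
    rintro _ ⟨z, -, rfl⟩
    exact (e z).2
  have hKfree : ∀ z ∈ K, h z ∉ K := by
    intro z hz hz'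
    rcases hKD _ hz' with h3 | h3 | h3
    · rcases hKD _ hz with rfl | rfl | h4
      · exact hh.1 _ h3
      · rw [← Function.iterate_succ_apply' h] at h3
        exact hnp _ (by omega) _ h3
      · exact h1 z h4 (hcl (hKsub _ hz'))
    · rcases hKD _ hz with rfl | rfl | h4
      · obtain ⟨k, rfl⟩ : ∃ k, m = k + 1 := ⟨m - 1, by omega⟩
        rw [Function.iterate_succ_apply] at h3
        exact hnp k (by omega) _ h3.symm
      · exact hh.1 _ h3
      · exact h1 z h4 (hcl (hKsub _ hz'))
    · exact h2 z (hcl (hKsub _ hz)) h3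
  refine iterate_notMem hh (hSc.image hec) (hSp.image _ hec.continuousOn) hKfree (x := x)
    (m := m) ?_ (by omega) ?_
  · exact ⟨u, left_mem_segment ℝ _ _, by simp only [hu]⟩
  · exact ⟨v, right_mem_segment ℝ _ _, by simp only [hv]⟩

end BrouwerDisc

/-- A free or critical closed disc is disjoint from all its iterates hⁿ(D), |n| ≥ 2. -/
theorem stmt2 (h : Homeomorph Plane Plane)
    (hfree : ∀ x : Plane, h x ≠ x) (hor : IsotopicToId ⇑h)
    (D : Set Plane)
    (hdisc : Nonempty (D ≃ₜ (Metric.closedBall (0 : Plane) 1 : Set Plane)))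
    (hD : (D ∩ ⇑h '' D = ∅) ∨
      (interior D ∩ ⇑h '' interior D = ∅ ∧ (D ∩ ⇑h '' D).Nonempty)) :
    ∀ n : ℤ, 2 ≤ |n| → D ∩ (⇑(h.toEquiv ^ n) '' D) = ∅ := by
  obtain ⟨e⟩ := hdisc
  have hinner : ∀ x ∈ interior D, h x ∉ interior D := by
    intro x hx hx'
    rcases hD with hD | ⟨hD, -⟩
    · exact Set.eq_empty_iff_forall_notMem.1 hD (h x)
        ⟨interior_subset hx', Set.mem_image_of_mem _ (interior_subset hx)⟩
    · exact Set.eq_empty_iff_forall_notMem.1 hD (h x) ⟨hx', Set.mem_image_of_mem _ hx⟩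
  have key : ∀ m : ℕ, 2 ≤ m → ∀ x ∈ D, (h.toEquiv ^ m) x ∉ D := fun m hm x hx =>
    BrouwerDisc.disc_iterate_notMem ⟨hfree, hor⟩ e.symm hinner hx hm
  intro n hn
  rw [Set.eq_empty_iff_forall_notMem]
  rintro _ ⟨hy, x, hx, rfl⟩
  obtain ⟨m, rfl | rfl⟩ := n.eq_nat_or_neg
  · rw [Nat.abs_cast] at hn
    exact key m (by exact_mod_cast hn) x hx (by simpa using hy)
  · rw [abs_neg, Nat.abs_cast] at hn
    refine key m (by exact_mod_cast hn) _ hy ?_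
    simpa using hx
end

section
/- Let h be a Brouwer homeomorphism of ℝ². Then every point of ℝ² is contained in a translation arc for h. -/
/-- A continuous logarithm of a constant function is constant. -/
theorem eq_of_exp_comp_const {A : Type*} [TopologicalSpace A] [PreconnectedSpace A] {g : A → ℂ}
    (hg : Continuous g) {c : ℂ} (hc : ∀ a, Complex.exp (g a) = c) (a b : A) : g a = g b := by
  have := Complex.isCoveringMap_exp.eq_of_comp_eq hg (continuous_const (y := g b))
    (by ext z; simp [hc]) b rfl
  exact congrFun this a

/-- An orientation preserving homeomorphism of the plane without fixed points has no points of
period two. -/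
theorem no_period_two_s13 (h : Homeomorph Plane Plane) (hfree : ∀ x : Plane, h x ≠ x)
    (hor : IsotopicToId ⇑h) (a : Plane) : h (h a) ≠ a := by
  intro hp
  obtain ⟨F, hF, hhom, hF0, hF1⟩ := hor
  let e := Complex.orthonormalBasisOneI.repr.symm
  let f : C(ℝ × Plane, ℂ) := ⟨fun q => e (F q.1 (h q.2) - F q.1 q.2), by
    refine e.continuous.comp (Continuous.sub ?_ hF)
    exact hF.comp (continuous_fst.prodMk (h.continuous.comp continuous_snd))⟩
  have hf : ∀ q, f q ≠ 0 := by
    intro q hq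
    obtain ⟨g, hg⟩ := hhom q.1
    have h1 : F q.1 (h q.2) - F q.1 q.2 = 0 := e.map_eq_zero_iff.mp hq
    rw [← hg, sub_eq_zero] at h1
    exact hfree _ (g.injective h1)
  obtain ⟨Θ, ⟨-, hΘ⟩, -⟩ := Complex.isCoveringMapOn_exp.existsUnique_continuousMap_lifts f
    (a₀ := (0, a)) (e₀ := Complex.log (f (0, a))) (Complex.exp_log (hf _)) hf
  have hexp : ∀ q, Complex.exp (Θ q) = f q := fun q => congrFun hΘ q
  have hc1 : Continuous fun z : Plane => Θ (1, z) - Θ (0, h z) := by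
    have := h.continuous
    fun_prop
  have key1 := eq_of_exp_comp_const hc1 (c := 1) (fun z => by
    rw [Complex.exp_sub, hexp, hexp]
    have : f (1, z) = f (0, h z) := by simp [f, hF0, hF1]
    rw [this, div_self (hf _)]) a (h a)
  have hneg : ∀ t, Complex.exp (Θ (t, a) - Θ (t, h a)) = -1 := by
    intro t
    rw [Complex.exp_sub, hexp, hexp]
    have : f (t, a) = - f (t, h a) := by simp [f, hp]
    rw [this, neg_div, div_self (hf _)]
  have hc2 : Continuous fun t : ℝ => Θ (t, a) - Θ (t, h a) := by fun_prop
  have key2 := eq_of_exp_comp_const hc2 hneg 1 0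
  simp only [hp] at key1 key2
  have hzero : Θ (0, a) - Θ (0, h a) = 0 := by linear_combination (key1 - key2) / 2
  have := hneg 0
  rw [hzero, Complex.exp_zero] at this
  norm_num at this

/-- The largest disc about `x` whose interior is disjoint from its image: some boundary point `y` has
its image on the boundary circle, and any point of the disc with image in the disc is of this kind. -/
theorem exists_tangent_disc (h : Homeomorph Plane Plane) (hfree : ∀ x : Plane, h x ≠ x)
    (x : Plane) : ∃ r > 0, ∃ y, dist y x = r ∧ dist (h y) x = r ∧
      ∀ z, dist z x ≤ r → dist (h z) x ≤ r → dist z x = r ∧ dist (h z) x = r := by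
  have hcont : Continuous fun z => max (dist z x) (dist (h z) x) := by
    have := h.continuous
    fun_prop
  obtain ⟨y, hy⟩ := hcont.exists_forall_le
    (Filter.tendsto_atTop_mono (fun z => le_max_left _ _) (tendsto_dist_right_cocompact_atTop x))
  set r := max (dist y x) (dist (h y) x) with hr
  have hrpos : 0 < r := by
    by_contra hle
    have h1 : dist y x ≤ 0 := (le_max_left _ _).trans (not_lt.mp hle)
    have h2 : dist (h y) x ≤ 0 := (le_max_right _ _).trans (not_lt.mp hle)
    exact hfree y ((dist_le_zero.mp h2).trans (dist_le_zero.mp h1).symm)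
  have hB : ∀ z ∈ Metric.ball x r, h z ∉ Metric.ball x r := fun z hz hz' =>
    absurd (hy z) (not_le.mpr (max_lt hz hz'))
  have hcl : closure (Metric.ball x r) = Metric.closedBall x r := closure_ball x hrpos.ne'
  have key : ∀ z, dist z x ≤ r → dist (h z) x ≤ r → dist z x = r ∧ dist (h z) x = r := by
    intro z hz hhz
    refine ⟨hz.antisymm ?_, hhz.antisymm ?_⟩
    · by_contra! hlt
      have hmem : h z ∈ closure (Metric.ball x r) := hcl ▸ hhz
      obtain ⟨w, ⟨u, hu, rfl⟩, hw⟩ := mem_closure_iff.mp hmem _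
        (h.isOpenMap _ Metric.isOpen_ball) ⟨z, hlt, rfl⟩
      exact hB u hu hw
    · by_contra! hlt
      have hmem : z ∈ closure (Metric.ball x r) := hcl ▸ hz
      obtain ⟨u, hu, hu'⟩ := mem_closure_iff.mp hmem _
        (Metric.isOpen_ball.preimage h.continuous) hlt
      exact hB u hu' hu
  obtain ⟨h1, h2⟩ := key y (le_max_left _ _) (le_max_right _ _)
  exact ⟨r, hrpos, y, h1, h2, key⟩

/-- Every point of the plane is contained in a translation arc of a Brouwer
homeomorphism h: a simple arc from some p to h(p) meeting its image only in h(p). -/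
theorem stmt13 (h : Homeomorph Plane Plane)
    (hfree : ∀ x : Plane, h x ≠ x) (hor : IsotopicToId ⇑h) :
    ∀ x : Plane, ∃ (p : Plane) (γ : ℝ → Plane),
      ContinuousOn γ (Set.Icc 0 1) ∧ Set.InjOn γ (Set.Icc 0 1) ∧
      γ 0 = p ∧ γ 1 = h p ∧
      (γ '' Set.Icc 0 1) ∩ ⇑h '' (γ '' Set.Icc 0 1) = {h p} ∧
      x ∈ γ '' Set.Icc 0 1 := by
  intro x
  obtain ⟨r, hr, y, hy, hhy, key⟩ := exists_tangent_disc h hfree x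
  let γ : ℝ → Plane := fun s => x + (max (1 - 2 * s) 0 • (y - x) + max (2 * s - 1) 0 • (h y - x))
  have hleft : ∀ s, s ≤ 1 / 2 → γ s = x + (1 - 2 * s) • (y - x) := fun s hs => by
    simp only [γ]
    rw [max_eq_left (by linarith), max_eq_right (by linarith), zero_smul, add_zero]
  have hright : ∀ s, 1 / 2 ≤ s → γ s = x + (2 * s - 1) • (h y - x) := fun s hs => by
    simp only [γ]
    rw [max_eq_right (by linarith), max_eq_left (by linarith), zero_smul, zero_add]
  have h0 : γ 0 = y := by rw [hleft 0 (by norm_num)]; simp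
  have h1 : γ 1 = h y := by rw [hright 1 (by norm_num)]; norm_num
  have hd : ∀ s, dist (γ s) x = |1 - 2 * s| * r := by
    intro s
    rcases le_total s (1 / 2) with hs | hs
    · rw [hleft s hs, dist_eq_norm, add_sub_cancel_left, norm_smul, ← dist_eq_norm y, hy,
        Real.norm_eq_abs]
    · rw [hright s hs, dist_eq_norm, add_sub_cancel_left, norm_smul, ← dist_eq_norm (h y), hhy,
        Real.norm_eq_abs, abs_sub_comm]
  have hle : ∀ s ∈ Set.Icc (0 : ℝ) 1, dist (γ s) x ≤ r := by
    rintro s ⟨hs0, hs1⟩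
    rw [hd]
    have : |1 - 2 * s| ≤ 1 := abs_le.mpr ⟨by linarith, by linarith⟩
    nlinarith
  have hend : ∀ s, dist (γ s) x = r → s = 0 ∨ s = 1 := by
    intro s hs
    rw [hd] at hs
    have : |1 - 2 * s| = 1 := by
      apply mul_right_cancel₀ hr.ne'
      rw [hs, one_mul]
    rcases eq_or_eq_neg_of_abs_eq this with h | h
    · left; linarith
    · right; linarith
  -- Points at equal distance from `x` on the two different radii coincide only at the centre.
  have hcross : ∀ s, s < 1 / 2 → γ s ≠ γ (1 - s) := by
    intro s hs heq
    rw [hleft s hs.le, hright (1 - s) (by linarith), show 2 * (1 - s) - 1 = 1 - 2 * s by ring] at heq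
    have h2 := smul_right_injective Plane (show 1 - 2 * s ≠ 0 by linarith) (add_left_cancel heq)
    exact hfree y (sub_left_injective h2).symm
  refine ⟨y, γ, ?_, ?_, h0, h1, ?_, 1 / 2, by norm_num, ?_⟩
  · exact Continuous.continuousOn (by fun_prop)
  · intro s _ t _ hst
    have habs : |1 - 2 * s| = |1 - 2 * t| := by
      apply mul_right_cancel₀ hr.ne'
      rw [← hd, ← hd, hst]
    rcases abs_eq_abs.mp habs with h2 | h2
    · linarith
    · have ht : t = 1 - s := by linarith
      subst ht
      rcases lt_trichotomy s (1 / 2) with hs | hs | hs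
      · exact absurd hst (hcross s hs)
      · linarith
      · refine absurd ?_ (hcross (1 - s) (by linarith))
        rw [sub_sub_cancel, hst]
  · apply Set.Subset.antisymm
    · rintro _ ⟨⟨s, hs, rfl⟩, _, ⟨t, ht, rfl⟩, hst⟩
      obtain ⟨ht', hs'⟩ := key (γ t) (hle t ht) (hst ▸ hle s hs)
      rw [hst] at hs'
      rw [Set.mem_singleton_iff]
      rcases hend t ht' with rfl | rfl
      · rw [← hst, h0]
      · rw [h1] at hst
        rcases hend s hs' with rfl | rfl
        · exact absurd (hst.trans h0) (no_period_two_s13 h hfree hor y)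
        · exact h1
    · rintro _ rfl
      exact ⟨⟨1, by norm_num, h1⟩, y, ⟨0, by norm_num, h0⟩, rfl⟩
  · rw [hleft _ le_rfl]; norm_num
end
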